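/- Lower Gaussian bound (Theorem 1.1, lower part): For every real μ ≥ 1 there exists a constant C > 0 such that for every choice of continuous ν, a : ℝ → ℝ with 1/μ ≤ ν(x) ≤ μ and 1/μ ≤ a(x) ≤ μ for all x, every real W ≥ 0, every corrector T and every fundamental solution P of the canonical equation, one has P(t,x,y) ≥ (1/(C t^{1/2}))·exp(−C|T(x) − T(y) − W t|²/t) for all t > 0 and all x, y ∈ ℝ. -/

import Mathlib

open MeasureTheory Filter

/-- Two-sided ellipticity bounds `1/μ ≤ f ≤ μ`. -/
def Elliptic (μ : ℝ) (f : ℝ → ℝ) : Prop := ∀ x : ℝ, 1 / μ ≤ f x ∧ f x ≤ μ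

/-- A classical solution of the canonical equation
`ν(x)∂ₜp − ∂ₓ(ν(x)a(x)∂ₓp) + W∂ₓp = 0` for every time `t ∈ s` and every `x ∈ ℝ`. -/
def IsCanonicalSolOn (ν a : ℝ → ℝ) (W : ℝ) (u : ℝ → ℝ → ℝ) (s : Set ℝ) : Prop :=
  ∃ ut ux q : ℝ → ℝ → ℝ, ∀ t ∈ s, ∀ x : ℝ,
    HasDerivAt (fun τ => u τ x) (ut t x) t ∧
    HasDerivAt (fun ξ => u t ξ) (ux t x) x ∧
    HasDerivAt (fun ξ => ν ξ * a ξ * ux t ξ) (q t x) x ∧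
    ν x * ut t x - q t x + W * ux t x = 0

/-- A corrector: `T(0) = 0`, `−(aνT')' + WT' = Wν` and `1/μ⁵ ≤ T' ≤ μ⁵`. -/
def IsCorrector (μ : ℝ) (ν a : ℝ → ℝ) (W : ℝ) (T : ℝ → ℝ) : Prop :=
  T 0 = 0 ∧ ∃ T' : ℝ → ℝ,
    (∀ x, HasDerivAt T (T' x) x) ∧
    (∀ x, HasDerivAt (fun y => a y * ν y * T' y) (W * T' x - W * ν x) x) ∧
    (∀ x, 1 / μ ^ 5 ≤ T' x ∧ T' x ≤ μ ^ 5)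

/-- An adjoint corrector: `T̃(0) = 0`, `(aνT̃')' + WT̃' = Wν` and `1/μ⁵ ≤ T̃' ≤ μ⁵`. -/
def IsAdjointCorrector (μ : ℝ) (ν a : ℝ → ℝ) (W : ℝ) (T : ℝ → ℝ) : Prop :=
  T 0 = 0 ∧ ∃ T' : ℝ → ℝ,
    (∀ x, HasDerivAt T (T' x) x) ∧
    (∀ x, HasDerivAt (fun y => a y * ν y * T' y) (W * ν x - W * T' x) x) ∧
    (∀ x, 1 / μ ^ 5 ≤ T' x ∧ T' x ≤ μ ^ 5)

/-- A fundamental solution of the canonical equation. -/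
def IsFundSol (ν a : ℝ → ℝ) (W : ℝ) (P : ℝ → ℝ → ℝ → ℝ) : Prop :=
  (∀ y : ℝ, IsCanonicalSolOn ν a W (fun t x => P t x y) (Set.Ioi 0)) ∧
  (∀ y : ℝ, ∀ t : ℝ, 0 < t → ∀ x : ℝ, 0 ≤ P t x y) ∧
  (∀ y : ℝ, ∀ t : ℝ, 0 < t → ∫ x : ℝ, ν x * P t x y = 1) ∧
  (∀ y : ℝ, ∀ φ : ℝ → ℝ, Continuous φ → (∃ B : ℝ, ∀ x, |φ x| ≤ B) →
    Tendsto (fun t => ∫ x : ℝ, ν x * P t x y * φ x)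
      (nhdsWithin 0 (Set.Ioi 0)) (nhds (φ y))) ∧
  (∀ s t : ℝ, 0 < s → 0 < t → ∀ x y : ℝ,
    P (t + s) x y = ∫ z : ℝ, ν z * P t x z * P s z y)

/-!
In the mass coordinate `N`, a primitive of `ν`, a nonnegative solution `u` has a mass
`∫ ξ in y..x, ν ξ * u t ξ` that solves a parabolic equation in the two variables `x` and `y`. A
Gaussian bump around a moving point of the `(N x, N y)`-plane, lowered so as to be positive in a
disc only and decaying at a suitable rate, is a subsolution of that equation where it is positive.
Started where the mass is at least one half, and steered so that the edge of the disc meets the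
diagonal at `x` at the prescribed time, it bounds the mass from below; there both sides vanish on
the diagonal, and differentiating gives `u t x ≥ exp (-C (1 + |N x - W t|² / t)) / (C √t)`, if `N`
vanishes at the source point `y`. The corrector equation says that `a ν T' - W (T - N)` is constant,
which allows `T x - T y` to replace `N x` up to `O(√t)`.

The comparison needs some regularity in space and time jointly, whereas a pointwise solution is only
separately continuous. Nonnegativity helps: by Baire's theorem and Gaussian barriers, `u` is lower
semicontinuous towards later times, which is all that a minimum principle requires. Hence `u`
dominates the Dirichlet solutions on bounded intervals, and the mass comparison is carried out for
these; up to a small error in the equation, they are obtained from the Yosida approximation.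
-/

section LowerGaussianBound

open Set Topology Function
open scoped BoundedContinuousFunction

/-! ### Minimum principles -/

section Operators

variable {ν k : ℝ → ℝ} {W : ℝ}

/-- The function `v` is differentiable near `x` and satisfies `-(k v')' + W v' = ℓ` at `x`
classically: the flux `k v'` is differentiable at `x`. -/
def HasEllipticOpAt (k : ℝ → ℝ) (W : ℝ) (v : ℝ → ℝ) (ℓ x : ℝ) : Prop :=
  (∀ᶠ ξ in 𝓝 x, DifferentiableAt ℝ v ξ) ∧
    HasDerivAt (fun ξ => k ξ * deriv v ξ) (W * deriv v x - ℓ) x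

/-- The function `u` satisfies `ν ∂ₜu - ∂ₓ(k ∂ₓu) + W ∂ₓu = ℓ` at `(t, x)` classically. -/
def HasParabolicOpAt (ν k : ℝ → ℝ) (W : ℝ) (u : ℝ → ℝ → ℝ) (ℓ t x : ℝ) : Prop :=
  ∃ ut, HasDerivAt (fun s => u s x) ut t ∧ HasEllipticOpAt k W (u t) (ℓ - ν x * ut) x

namespace HasEllipticOpAt

variable {v w v' : ℝ → ℝ} {ℓ m c x q : ℝ}

theorem of_hasDerivAt (hv : ∀ᶠ ξ in 𝓝 x, HasDerivAt v (v' ξ) ξ)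
    (hq : HasDerivAt (fun ξ => k ξ * v' ξ) q x) :
    HasEllipticOpAt k W v (W * v' x - q) x := by
  refine ⟨hv.mono fun _ h => h.differentiableAt, ?_⟩
  rw [hv.self_of_nhds.deriv, sub_sub_cancel]
  exact hq.congr_of_eventuallyEq (hv.mono fun ξ h => by simp only [h.deriv])

theorem congr_op (h : HasEllipticOpAt k W v ℓ x) (hm : ℓ = m) : HasEllipticOpAt k W v m x :=
  hm ▸ h

theorem differentiableAt (h : HasEllipticOpAt k W v ℓ x) : DifferentiableAt ℝ v x :=
  h.1.self_of_nhds

theorem add (hv : HasEllipticOpAt k W v ℓ x) (hw : HasEllipticOpAt k W w m x) :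
    HasEllipticOpAt k W (fun ξ => v ξ + w ξ) (ℓ + m) x := by
  refine (of_hasDerivAt (hv.1.mp (hw.1.mono fun ξ hw hv => hv.hasDerivAt.add hw.hasDerivAt))
    ((hv.2.add hw.2).congr_of_eventuallyEq (.of_forall fun ξ => ?_))).congr_op ?_
  · simp only [Pi.add_apply, mul_add]
  · ring

theorem const_mul (c : ℝ) (hv : HasEllipticOpAt k W v ℓ x) :
    HasEllipticOpAt k W (fun ξ => c * v ξ) (c * ℓ) x := by
  refine (of_hasDerivAt (hv.1.mono fun ξ hv => hv.hasDerivAt.const_mul c)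
    ((hv.2.const_mul c).congr_of_eventuallyEq (.of_forall fun ξ => ?_))).congr_op ?_
  · simp only [mul_left_comm]
  · ring

theorem add_const (c : ℝ) (hv : HasEllipticOpAt k W v ℓ x) :
    HasEllipticOpAt k W (fun ξ => v ξ + c) ℓ x := by
  refine (of_hasDerivAt (hv.1.mono fun ξ hv => hv.hasDerivAt.add_const c) hv.2).congr_op ?_
  ring

theorem const (c : ℝ) : HasEllipticOpAt k W (fun _ => c) 0 x := by
  refine ⟨.of_forall fun ξ => differentiableAt_const c, ?_⟩
  simpa only [deriv_const, mul_zero, sub_zero] using hasDerivAt_const x (0 : ℝ)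

theorem nonpos_of_isLocalMin (hk : ∀ ξ, 0 < k ξ) (hv : HasEllipticOpAt k W v ℓ x)
    (hmin : IsLocalMin v x) : ℓ ≤ 0 := by
  by_contra! hℓ
  have hv0 : deriv v x = 0 := hmin.deriv_eq_zero
  have hflux : deriv (fun ξ => k ξ * deriv v ξ) x < 0 := by
    rw [hv.2.deriv, hv0]; linarith
  have hneg : ∀ᶠ ξ in 𝓝[>] x, deriv v ξ < 0 := by
    filter_upwards [nhdsWithin_le_nhds
      (eventually_nhdsWithin_sign_eq_of_deriv_neg hflux (by rw [hv0, mul_zero])),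
      self_mem_nhdsWithin] with ξ hξ hxξ
    rw [sign_neg (sub_neg.2 hxξ), sign_eq_neg_one_iff] at hξ
    exact (pos_iff_neg_of_mul_neg hξ).1 (hk ξ)
  obtain ⟨b, hxb, hb⟩ := mem_nhdsGT_iff_exists_Ioc_subset.1
    (hneg.and (nhdsWithin_le_nhds (hv.1.and hmin)))
  have hanti : StrictAntiOn v (Icc x b) := by
    refine strictAntiOn_of_deriv_neg (convex_Icc x b) (fun z hz => ?_) fun z hz => ?_
    · rcases hz.1.eq_or_lt with rfl | hxz
      · exact hv.differentiableAt.continuousAt.continuousWithinAt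
      · exact (hb ⟨hxz, hz.2⟩).2.1.continuousAt.continuousWithinAt
    · rw [interior_Icc] at hz
      exact (hb ⟨hz.1, hz.2.le⟩).1
  exact (hanti (left_mem_Icc.2 hxb.le) (right_mem_Icc.2 hxb.le) hxb).not_ge
    (hb ⟨hxb, le_rfl⟩).2.2

end HasEllipticOpAt

theorem eventually_lt_left_of_hasDerivAt_pos {f : ℝ → ℝ} {f' t : ℝ} (hf : HasDerivAt f f' t)
    (hf' : 0 < f') : ∀ᶠ s in 𝓝[<] t, f s < f t := by
  have hslope := (hasDerivAt_iff_tendsto_slope.1 hf).eventually (lt_mem_nhds hf')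
  filter_upwards [nhdsWithin_mono t (fun s (hs : s < t) => hs.ne) hslope, self_mem_nhdsWithin]
    with s hs hst
  rw [slope_def_field] at hs
  exact sub_neg.1 ((neg_iff_neg_of_mul_pos (div_eq_mul_inv (_ : ℝ) _ ▸ hs)).2
    (inv_lt_zero.2 (sub_neg.2 hst)))

namespace HasParabolicOpAt

variable {u w : ℝ → ℝ → ℝ} {ℓ m t x : ℝ}

theorem congr_op (h : HasParabolicOpAt ν k W u ℓ t x) (hm : ℓ = m) :
    HasParabolicOpAt ν k W u m t x :=
  hm ▸ h

theorem continuousAt (h : HasParabolicOpAt ν k W u ℓ t x) : ContinuousAt (u t) x :=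
  let ⟨_, _, hx⟩ := h
  hx.differentiableAt.continuousAt

theorem continuousAt_time (h : HasParabolicOpAt ν k W u ℓ t x) : ContinuousAt (fun s => u s x) t :=
  let ⟨_, ht, _⟩ := h
  ht.continuousAt

theorem add (hu : HasParabolicOpAt ν k W u ℓ t x) (hw : HasParabolicOpAt ν k W w m t x) :
    HasParabolicOpAt ν k W (fun s ξ => u s ξ + w s ξ) (ℓ + m) t x := by
  obtain ⟨ut, hut, hux⟩ := hu
  obtain ⟨wt, hwt, hwx⟩ := hw
  exact ⟨ut + wt, hut.add hwt, (hux.add hwx).congr_op (by ring)⟩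

theorem const_mul (c : ℝ) (hu : HasParabolicOpAt ν k W u ℓ t x) :
    HasParabolicOpAt ν k W (fun s ξ => c * u s ξ) (c * ℓ) t x := by
  obtain ⟨ut, hut, hux⟩ := hu
  exact ⟨c * ut, hut.const_mul c, (hux.const_mul c).congr_op (by ring)⟩

theorem add_time {f : ℝ → ℝ} {f' : ℝ} (hu : HasParabolicOpAt ν k W u ℓ t x)
    (hf : HasDerivAt f f' t) :
    HasParabolicOpAt ν k W (fun s ξ => u s ξ + f s) (ℓ + ν x * f') t x := by
  obtain ⟨ut, hut, hux⟩ := hu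
  exact ⟨ut + f', hut.add hf, (hux.add_const (f t)).congr_op (by ring)⟩

theorem eventually_lt_left_of_isLocalMin (hν : 0 < ν x) (hk : ∀ ξ, 0 < k ξ)
    (hu : HasParabolicOpAt ν k W u ℓ t x) (hℓ : 0 < ℓ) (hmin : IsLocalMin (u t) x) :
    ∀ᶠ s in 𝓝[<] t, u s x < u t x := by
  obtain ⟨ut, hut, hux⟩ := hu
  have := hux.nonpos_of_isLocalMin hk hmin
  exact eventually_lt_left_of_hasDerivAt_pos hut ((mul_pos_iff_of_pos_left hν).1 (by linarith))

end HasParabolicOpAt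

theorem IsCanonicalSolOn.hasParabolicOpAt {a : ℝ → ℝ} {u : ℝ → ℝ → ℝ} {S : Set ℝ}
    (hu : IsCanonicalSolOn ν a W u S) {t : ℝ} (ht : t ∈ S) (x : ℝ) :
    HasParabolicOpAt ν (fun ξ => ν ξ * a ξ) W u 0 t x := by
  obtain ⟨ut, ux, q, h⟩ := hu
  obtain ⟨hut, -, hq, heq⟩ := h t ht x
  refine ⟨ut t x, hut, (HasEllipticOpAt.of_hasDerivAt
    (.of_forall fun ξ => (h t ht ξ).2.1) hq).congr_op ?_⟩
  linarith

end Operators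

section MinimumPrinciples

/-- Lower semicontinuity of `(t, x) ↦ u t x` at `(t, x)` along later times. -/
abbrev FutureLSCAt {X : Type*} [TopologicalSpace X] (u : ℝ → X → ℝ) (t : ℝ) (x : X) : Prop :=
  LowerSemicontinuousWithinAt (uncurry u) (Ioi t ×ˢ univ) (t, x)

theorem Ioc_subset_of_continuous_induction {G : Set ℝ} {c d : ℝ}
    (hinit : G ∈ 𝓝[>] c) (hright : ∀ t ∈ Ioo c d, t ∈ G → G ∈ 𝓝[>] t)
    (hleft : ∀ t ∈ Ioc c d, Ioo c t ⊆ G → t ∈ G) : Ioc c d ⊆ G := by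
  have key : Icc c d ⊆ {t | Ioc c t ⊆ G} := by
    refine IsClosed.Icc_subset_of_forall_mem_nhdsWithin (isClosed_of_closure_subset fun t ht => ?_)
      (by simp) fun t ⟨htG, ht⟩ => ?_
    · have htI : t ∈ Icc c d := closure_minimal inter_subset_right isClosed_Icc ht
      have hIoo : Ioo c t ⊆ G := fun s hs => by
        obtain ⟨r, hsr, hr, -⟩ := mem_closure_iff.1 ht (Ioi s) isOpen_Ioi hs.2
        exact hr ⟨hs.1, (mem_Ioi.1 hsr).le⟩
      refine ⟨fun s hs => ?_, htI⟩
      rcases hs.2.eq_or_lt with rfl | hst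
      · exact hleft s ⟨hs.1, htI.2⟩ hIoo
      · exact hIoo ⟨hs.1, hst⟩
    · have hG : G ∈ 𝓝[>] t := by
        rcases ht.1.eq_or_lt with rfl | hct
        · exact hinit
        · exact hright t ⟨hct, ht.2⟩ (htG (right_mem_Ioc.2 hct))
      obtain ⟨b, hb, hbG⟩ := mem_nhdsGT_iff_exists_Ioc_subset.1 hG
      filter_upwards [Ioc_mem_nhdsGT hb] with s hs r hr
      rcases le_or_gt r t with hrt | htr
      · exact htG ⟨hr.1, hrt⟩
      · exact hbG ⟨htr, hr.2.trans hs.2⟩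
  exact fun t ht => key ⟨ht.1.le, ht.2⟩ (right_mem_Ioc.2 ht.1)

theorem nonneg_of_forall_negative_min {X : Type*} [TopologicalSpace X] {K : Set X}
    (hK : IsCompact K) {c d : ℝ} {w : ℝ → X → ℝ}
    (hc : ∀ t ∈ Ioc c d, ContinuousOn (w t) K)
    (hmin : ∀ t ∈ Ioc c d, ∀ x ∈ K, w t x < 0 → IsMinOn (w t) K x →
      ∃ᶠ s in 𝓝[<] t, w s x ≤ w t x)
    (hlsc : ∀ t ∈ Ioo c d, ∀ x ∈ K, FutureLSCAt w t x)
    (hinit : ∀ x ∈ K, ∀ r < 0, ∀ᶠ p in 𝓝[Ioi c ×ˢ univ] (c, x), r < uncurry w p) :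
    ∀ t ∈ Ioc c d, ∀ x ∈ K, 0 ≤ w t x := by
  have spread : ∀ t r, (∀ x ∈ K, ∀ᶠ p in 𝓝[Ioi t ×ˢ univ] (t, x), r < uncurry w p) →
      ∀ᶠ s in 𝓝[>] t, ∀ x ∈ K, r < w s x := by
    intro t r h
    have h' : ∀ᶠ p in 𝓝[>] t ×ˢ 𝓝ˢ K, r < uncurry w p := by
      rw [hK.prod_nhdsSet_eq_biSup]
      simpa only [eventually_iSup, nhdsWithin_prod_eq, nhdsWithin_univ] using h
    exact h'.curry.mono fun s hs x hx => hs.self_of_nhdsSet x hx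
  intro t ht x hx
  refine le_of_forall_lt fun r hr => ?_
  suffices Ioc c d ⊆ {t | ∀ x ∈ K, r < w t x} from this ht x hx
  refine Ioc_subset_of_continuous_induction (spread c r fun x hx => hinit x hx r hr)
    (fun t ht hG => spread t r fun x hx => hlsc t ht x hx r (hG x hx)) fun t ht hG => ?_
  by_contra hbad
  obtain ⟨x, hx, hxr⟩ : ∃ x ∈ K, w t x ≤ r := by simpa using hbad
  obtain ⟨z, hz, hzmin⟩ := hK.exists_isMinOn ⟨x, hx⟩ (hc t ht)
  have hzr : w t z ≤ r := (hzmin hx).trans hxr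
  obtain ⟨s, hs, hsG⟩ := ((hmin t ht z hz (hzr.trans_lt hr) hzmin).and_eventually
    (Ioo_mem_nhdsLT ht.1)).exists
  exact (hG hsG z hz).not_ge (hs.trans hzr)

theorem nonneg_of_hasParabolicOpAt_pos {ν k : ℝ → ℝ} {W : ℝ} (hν : ∀ x, 0 < ν x)
    (hk : ∀ x, 0 < k x) {c d α β : ℝ} {w : ℝ → ℝ → ℝ}
    (hop : ∀ t ∈ Ioc c d, ∀ x ∈ Ioo α β, ∃ ℓ > 0, HasParabolicOpAt ν k W w ℓ t x)
    (hc : ∀ t ∈ Ioc c d, ContinuousOn (w t) (Icc α β))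
    (hα : ∀ t ∈ Ioc c d, 0 ≤ w t α) (hβ : ∀ t ∈ Ioc c d, 0 ≤ w t β)
    (hlsc : ∀ t ∈ Ioo c d, ∀ x ∈ Icc α β, FutureLSCAt w t x)
    (hinit : ∀ x ∈ Icc α β, ∀ r < 0, ∀ᶠ p in 𝓝[Ioi c ×ˢ univ] (c, x), r < uncurry w p) :
    ∀ t ∈ Ioc c d, ∀ x ∈ Icc α β, 0 ≤ w t x := by
  refine nonneg_of_forall_negative_min isCompact_Icc hc (fun t ht x hx hneg hmin => ?_) hlsc hinit
  have hxα : α < x := hx.1.lt_of_ne fun h => (hα t ht).not_gt (h ▸ hneg)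
  have hxβ : x < β := hx.2.lt_of_ne fun h => (hβ t ht).not_gt (h ▸ hneg)
  obtain ⟨ℓ, hℓ, hw⟩ := hop t ht x ⟨hxα, hxβ⟩
  exact ((hw.eventually_lt_left_of_isLocalMin (hν x) hk hℓ
    (hmin.isLocalMin (Icc_mem_nhds hxα hxβ))).mono fun s hs => hs.le).frequently

end MinimumPrinciples

/-! ### Barriers in the scale variable -/

section ScaleFunction

variable {ν k : ℝ → ℝ} {W : ℝ}

/-- The derivative of the scale function of the operator `-(k v')' + W v'`. -/
noncomputable def scaleDensity (k : ℝ → ℝ) (W x : ℝ) : ℝ :=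
  Real.exp (∫ z in 0..x, W / k z) / k x

/-- The scale function of `-(k v')' + W v'`: the increasing solution of the homogeneous equation,
normalised to vanish at `0`. -/
noncomputable def scale (k : ℝ → ℝ) (W x : ℝ) : ℝ := ∫ z in 0..x, scaleDensity k W z

theorem hasDerivAt_integral_of_continuous {f : ℝ → ℝ} (hf : Continuous f) (a x : ℝ) :
    HasDerivAt (fun x => ∫ z in a..x, f z) (f x) x :=
  intervalIntegral.integral_hasDerivAt_right (hf.intervalIntegrable _ _)
    hf.stronglyMeasurable.stronglyMeasurableAtFilter hf.continuousAt

theorem scaleDensity_pos (hk : ∀ x, 0 < k x) (x : ℝ) : 0 < scaleDensity k W x :=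
  div_pos (Real.exp_pos _) (hk x)

theorem continuous_scaleDensity (hkc : Continuous k) (hk : ∀ x, 0 < k x) :
    Continuous (scaleDensity k W) := by
  have hWk : Continuous fun z => W / k z := continuous_const.div hkc fun z => (hk z).ne'
  exact (intervalIntegral.continuous_primitive (fun _ _ => hWk.intervalIntegrable _ _) 0).rexp.div
    hkc fun z => (hk z).ne'

theorem hasDerivAt_mul_scaleDensity (hkc : Continuous k) (hk : ∀ x, 0 < k x) (x : ℝ) :
    HasDerivAt (fun ξ => k ξ * scaleDensity k W ξ) (W * scaleDensity k W x) x := by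
  have hWk : Continuous fun z => W / k z := continuous_const.div hkc fun z => (hk z).ne'
  have hcancel : (fun ξ => k ξ * scaleDensity k W ξ) = fun ξ => Real.exp (∫ z in 0..ξ, W / k z) :=
    funext fun ξ => mul_div_cancel₀ _ (hk ξ).ne'
  rw [hcancel]
  refine (hasDerivAt_integral_of_continuous hWk 0 x).exp.congr_deriv ?_
  rw [scaleDensity]; ring

theorem hasDerivAt_scale (hkc : Continuous k) (hk : ∀ x, 0 < k x) (x : ℝ) :
    HasDerivAt (scale k W) (scaleDensity k W x) x :=
  hasDerivAt_integral_of_continuous (continuous_scaleDensity hkc hk) 0 x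

theorem continuous_scale (hkc : Continuous k) (hk : ∀ x, 0 < k x) : Continuous (scale k W) :=
  continuous_iff_continuousAt.2 fun x => (hasDerivAt_scale hkc hk x).continuousAt

theorem strictMono_scale (hkc : Continuous k) (hk : ∀ x, 0 < k x) : StrictMono (scale k W) :=
  strictMono_of_deriv_pos fun x => by
    rw [(hasDerivAt_scale hkc hk x).deriv]; exact scaleDensity_pos hk x

theorem hasEllipticOpAt_comp_scale (hkc : Continuous k) (hk : ∀ x, 0 < k x) {φ φ' : ℝ → ℝ}
    {φ'' x : ℝ} (hφ : ∀ z, HasDerivAt φ (φ' z) z) (hφ' : HasDerivAt φ' φ'' (scale k W x)) :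
    HasEllipticOpAt k W (fun ξ => φ (scale k W ξ)) (-(φ'' * (k x * scaleDensity k W x ^ 2))) x := by
  have hσ := hasDerivAt_scale (W := W) hkc hk
  have hflux := (hφ'.comp x (hσ x)).mul (hasDerivAt_mul_scaleDensity (W := W) hkc hk x)
  refine (HasEllipticOpAt.of_hasDerivAt (.of_forall fun ξ => (hφ _).comp ξ (hσ ξ))
    (hflux.congr_of_eventuallyEq (.of_forall fun ξ => ?_))).congr_op ?_
  · simp only [Pi.mul_apply, comp_apply]; ring
  · simp only [comp_apply]; ring

end ScaleFunction

section CornerBarrier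

variable {ν k : ℝ → ℝ} {W : ℝ}

/-- A Gaussian in the scale variable, started at time `c - ε` from `x₀` and normalised to equal `1`
at `(c, x₀)`. For suitable `b` and `κ` it is a supersolution. -/
noncomputable def cornerBarrier (k : ℝ → ℝ) (W b κ c x₀ ε t x : ℝ) : ℝ :=
  Real.exp (-κ * Real.log ((t - c + ε) / ε)) *
    Real.exp (-b * (scale k W x - scale k W x₀) ^ 2 / (t - c + ε))

theorem continuousAt_cornerBarrier (hkc : Continuous k) (hk : ∀ x, 0 < k x) {b κ c x₀ ε t : ℝ}
    (hε : 0 < ε) (ht : c ≤ t) (x : ℝ) :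
    ContinuousAt (uncurry (cornerBarrier k W b κ c x₀ ε)) (t, x) := by
  have hτ : t - c + ε ≠ 0 := by linarith
  have hσ := continuous_scale (W := W) hkc hk
  unfold cornerBarrier
  simp only [uncurry_def]
  refine ContinuousAt.mul (ContinuousAt.rexp (continuousAt_const.mul (ContinuousAt.log ?_ ?_)))
    (ContinuousAt.rexp (ContinuousAt.div ?_ ?_ hτ))
  · fun_prop
  · exact div_ne_zero hτ hε.ne'
  · fun_prop
  · fun_prop

theorem hasParabolicOpAt_cornerBarrier (hkc : Continuous k) (hk : ∀ x, 0 < k x)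
    {b κ c x₀ ε t x : ℝ} (hb : 0 ≤ b) (hε : 0 < ε) (ht : c ≤ t)
    (hbν : 4 * b * (k x * scaleDensity k W x ^ 2) ≤ ν x)
    (hκν : κ * ν x ≤ 2 * b * (k x * scaleDensity k W x ^ 2)) :
    ∃ ℓ, 0 ≤ ℓ ∧ HasParabolicOpAt ν k W (cornerBarrier k W b κ c x₀ ε) ℓ t x := by
  have hτ : 0 < t - c + ε := by linarith
  set τ := t - c + ε
  set D := k x * scaleDensity k W x ^ 2
  set A := Real.exp (-κ * Real.log (τ / ε))
  set σ₀ := scale k W x₀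
  set y := scale k W x - σ₀
  set B := Real.exp (-b * y ^ 2 / τ)
  have hτt : HasDerivAt (fun s => s - c + ε) 1 t := ((hasDerivAt_id t).sub_const c).add_const ε
  have htime := (((hτt.div_const ε).log (div_pos hτ hε).ne').const_mul (-κ)).exp.mul
    (((hasDerivAt_const t (-b * y ^ 2)).div hτt hτ.ne').exp)
  have hexp : ∀ z, HasDerivAt (fun z => A * Real.exp (-b * (z - σ₀) ^ 2 / τ))
      (A * Real.exp (-b * (z - σ₀) ^ 2 / τ) * (-2 * b * (z - σ₀) / τ)) z := fun z => by
    refine (((((((hasDerivAt_id z).sub_const σ₀).pow 2).const_mul (-b)).div_const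
      τ).exp).const_mul A).congr_deriv ?_
    simp only [Pi.pow_apply, id]; push_cast; ring
  have hexp' := (hexp (scale k W x)).mul
    ((((hasDerivAt_id (scale k W x)).sub_const σ₀).const_mul (-2 * b)).div_const τ)
  have hspace := hasEllipticOpAt_comp_scale (W := W) hkc hk hexp hexp'
  refine ⟨A * B / τ * (b * y ^ 2 / τ * (ν x - 4 * b * D) + (2 * b * D - κ * ν x)), ?_,
    A * B * (-κ / τ + b * y ^ 2 / τ ^ 2), htime.congr_deriv ?_, hspace.congr_op ?_⟩
  · have := sub_nonneg.2 hbν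
    have := sub_nonneg.2 hκν
    positivity
  · simp only [Pi.div_apply, A, B, τ, y]
    field_simp
    ring
  · simp only [id, B, y, D]
    field_simp
    ring

theorem tendsto_cornerBarrier_factor {κ c d : ℝ} (hκ : 0 < κ) (hcd : c < d) :
    Tendsto (fun ε => Real.exp (-κ * Real.log ((d - c + ε) / ε))) (𝓝[>] 0) (𝓝 0) := by
  refine Real.tendsto_exp_atBot.comp
    ((Real.tendsto_log_atTop.comp ?_).const_mul_atTop_of_neg (neg_lt_zero.2 hκ))
  have hnum : Tendsto (fun ε : ℝ => d - c + ε) (𝓝[>] 0) (𝓝 (d - c)) :=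
    (Continuous.tendsto' (by fun_prop) 0 _ (by ring)).mono_left nhdsWithin_le_nhds
  simpa only [div_eq_mul_inv] using hnum.pos_mul_atTop (sub_pos.2 hcd) tendsto_inv_nhdsGT_zero

theorem exists_cornerBarrier (hνc : Continuous ν) (hν : ∀ x, 0 < ν x) (hkc : Continuous k)
    (hk : ∀ x, 0 < k x) {c d : ℝ} (hcd : c < d) (α β x₀ : ℝ) {δ : ℝ} (hδ : 0 < δ) :
    ∃ K : ℝ → ℝ → ℝ, (∀ t x, 0 ≤ K t x) ∧ K c x₀ = 1 ∧ (∀ x, K d x ≤ δ) ∧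
      (∀ t, c ≤ t → ∀ x, ContinuousAt (uncurry K) (t, x)) ∧
      ∀ t, c ≤ t → ∀ x ∈ Icc α β, ∃ ℓ, 0 ≤ ℓ ∧ HasParabolicOpAt ν k W K ℓ t x := by
  set D : ℝ → ℝ := fun x => k x * scaleDensity k W x ^ 2
  have hD : ∀ x, 0 < D x := fun x => mul_pos (hk x) (pow_pos (scaleDensity_pos hk x) 2)
  have hDc : Continuous D := hkc.mul ((continuous_scaleDensity hkc hk).pow 2)
  obtain ⟨b, hb, hbν⟩ : ∃ b > 0, ∀ x ∈ Icc α β, 4 * b * D x ≤ ν x := by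
    obtain ⟨m, hm, hmν⟩ := isCompact_Icc.exists_forall_le' (s := Icc α β) (a := 0)
      (hνc.div hDc fun x => (hD x).ne').continuousOn fun x _ => div_pos (hν x) (hD x)
    exact ⟨m / 4, by positivity, fun x hx => by
      have := (le_div_iff₀ (hD x)).1 (hmν x hx); linarith⟩
  obtain ⟨κ, hκ, hκν⟩ : ∃ κ > 0, ∀ x ∈ Icc α β, κ * ν x ≤ 2 * b * D x := by
    obtain ⟨m, hm, hmν⟩ := isCompact_Icc.exists_forall_le' (s := Icc α β) (a := 0)
      ((continuous_const.mul hDc).div hνc fun x => (hν x).ne').continuousOn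
      fun x _ => div_pos (mul_pos (show 0 < 2 * b by positivity) (hD x)) (hν x)
    exact ⟨m, hm, fun x hx => (le_div_iff₀ (hν x)).1 (hmν x hx)⟩
  obtain ⟨ε, hεδ, hε⟩ := (((tendsto_cornerBarrier_factor hκ hcd).eventually
    (gt_mem_nhds hδ)).and self_mem_nhdsWithin).exists
  refine ⟨cornerBarrier k W b κ c x₀ ε, fun t x => by unfold cornerBarrier; positivity, ?_,
    fun x => ?_, fun t ht x => continuousAt_cornerBarrier hkc hk hε ht x, fun t ht x hx =>
    hasParabolicOpAt_cornerBarrier hkc hk hb.le hε ht (hbν x hx) (hκν x hx)⟩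
  · simp [cornerBarrier, hε.ne']
  · refine (mul_le_of_le_one_right (Real.exp_pos _).le (Real.exp_le_one_iff.2 ?_)).trans hεδ.le
    exact div_nonpos_of_nonpos_of_nonneg (by nlinarith [sq_nonneg (scale k W x - scale k W x₀)])
      (by linarith)

end CornerBarrier

section BoxLemma

theorem le_of_forall_pos_sub_mul_le {a b C : ℝ} (h : ∀ ε > 0, a - ε * C ≤ b) : a ≤ b :=
  le_of_tendsto (f := fun ε : ℝ => a - ε * C) (x := 𝓝[>] 0)
    ((Continuous.tendsto' (by fun_prop) 0 a (by ring)).mono_left nhdsWithin_le_nhds)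
    (eventually_mem_nhdsWithin.mono h)

theorem FutureLSCAt.add_continuousAt {u f : ℝ → ℝ → ℝ} {t x : ℝ} (hu : FutureLSCAt u t x)
    (hf : ContinuousAt (uncurry f) (t, x)) : FutureLSCAt (fun s ξ => u s ξ + f s ξ) t x :=
  LowerSemicontinuousWithinAt.add hu hf.continuousWithinAt.lowerSemicontinuousWithinAt

theorem exists_two_corner_supersolution {ν k : ℝ → ℝ} {W : ℝ} (hνc : Continuous ν)
    (hν : ∀ x, 0 < ν x) (hkc : Continuous k) (hk : ∀ x, 0 < k x) {c d L ε : ℝ} (hcd : c < d)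
    (α β : ℝ) (hL : 0 ≤ L) (hε : 0 < ε) :
    ∃ g : ℝ → ℝ → ℝ, (∀ t, c ≤ t → ∀ x, 0 ≤ g t x) ∧ L ≤ g c α ∧ L ≤ g c β ∧
      (∀ x, g d x ≤ ε * (2 * L + (d - c))) ∧
      (∀ t, c ≤ t → ∀ x, ContinuousAt (uncurry g) (t, x)) ∧
      ∀ t, c ≤ t → ∀ x ∈ Icc α β, ∃ ℓ > 0, HasParabolicOpAt ν k W g ℓ t x := by
  obtain ⟨K, hK0, hK1, hKd, hKc, hK⟩ :=
    exists_cornerBarrier (W := W) hνc hν hkc hk hcd α β α hε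
  obtain ⟨K', hK0', hK1', hKd', hKc', hK'⟩ :=
    exists_cornerBarrier (W := W) hνc hν hkc hk hcd α β β hε
  refine ⟨fun t x => L * (K t x + K' t x) + ε * (t - c), fun t ht x => ?_, ?_, ?_, fun x => ?_,
    fun t ht x => ?_, fun t ht x hx => ?_⟩
  · have := mul_nonneg hL (add_nonneg (hK0 t x) (hK0' t x))
    have := mul_nonneg hε.le (sub_nonneg.2 ht)
    positivity
  · simp only [hK1]; linarith [mul_nonneg hL (hK0' c α)]
  · simp only [hK1']; linarith [mul_nonneg hL (hK0 c β)]
  · linarith [mul_le_mul_of_nonneg_left (add_le_add (hKd x) (hKd' x)) hL]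
  · exact (((hKc t ht x).add (hKc' t ht x)).const_mul L).add
      (f := fun p : ℝ × ℝ => L * (uncurry K p + uncurry K' p)) (by fun_prop)
  · obtain ⟨ℓ, hℓ, hKℓ⟩ := hK t ht x hx
    obtain ⟨ℓ', hℓ', hKℓ'⟩ := hK' t ht x hx
    have htime : HasDerivAt (fun s => ε * (s - c)) ε t := by
      simpa using ((hasDerivAt_id t).sub_const c).const_mul ε
    exact ⟨_, by have := hν x; positivity, ((hKℓ.add hKℓ').const_mul L).add_time htime⟩

/-- At the two lower corners of the box `u` may jump; barriers that are large there absorb this. -/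
theorem le_of_le_on_parabolicBoundary {ν k : ℝ → ℝ} {W : ℝ} (hνc : Continuous ν)
    (hν : ∀ x, 0 < ν x) (hkc : Continuous k) (hk : ∀ x, 0 < k x) {u : ℝ → ℝ → ℝ} {c d α β L : ℝ}
    (hcd : c < d) (hL : 0 ≤ L)
    (hu : ∀ t ∈ Ioc c d, ∀ x, 0 ≤ u t x)
    (hsol : ∀ t ∈ Ioc c d, ∀ x, HasParabolicOpAt ν k W u 0 t x)
    (hrow : ∀ x ∈ Icc α β, L ≤ u c x)
    (hα : ∀ t ∈ Ioc c d, L ≤ u t α) (hβ : ∀ t ∈ Ioc c d, L ≤ u t β)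
    (hlsc : ∀ t ∈ Ico c d, ∀ x ∈ Icc α β, (t = c → x ∈ Ioo α β) → FutureLSCAt u t x) :
    ∀ x ∈ Icc α β, L ≤ u d x := by
  intro x hx
  refine le_of_forall_pos_sub_mul_le (C := 2 * L + (d - c)) fun ε hε => ?_
  obtain ⟨g, hg0, hgα, hgβ, hgd, hgc, hg⟩ :=
    exists_two_corner_supersolution (W := W) hνc hν hkc hk hcd α β hL hε
  have hfc : ∀ t, c ≤ t → ∀ x, ContinuousAt (uncurry fun t x => g t x - L) (t, x) :=
    fun t ht x => (hgc t ht x).sub continuousAt_const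
  have hside : ∀ t, c ≤ t → ∀ z, L ≤ u t z → 0 ≤ u t z + (g t z - L) := fun t ht z hz => by
    linarith [hg0 t ht z]
  suffices 0 ≤ u d x + (g d x - L) by linarith [hgd x]
  refine nonneg_of_hasParabolicOpAt_pos (c := c) (d := d) (α := α) (β := β) (W := W) hν hk
    (w := fun t x => u t x + (g t x - L)) (fun t ht z hz => ?_) (fun t ht z _ => ?_)
    (fun t ht => hside t ht.1.le α (hα t ht)) (fun t ht => hside t ht.1.le β (hβ t ht))
    (fun t ht z hz => ?_) (fun z hz r hr => ?_) d ⟨hcd, le_rfl⟩ x hx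
  · obtain ⟨ℓ, hℓ, hgℓ⟩ := hg t ht.1.le z (Ioo_subset_Icc_self hz)
    exact ⟨_, by linarith, (hsol t ht z).add (hgℓ.add_time (hasDerivAt_const t (-L)))⟩
  · exact ((hsol t ht z).continuousAt.add ((hfc t ht.1.le z).comp (f := fun z => (t, z))
      (by fun_prop))).continuousWithinAt
  · exact (hlsc t ⟨ht.1.le, ht.2⟩ z hz fun h => absurd h ht.1.ne').add_continuousAt
      (hfc t ht.1.le z)
  · by_cases hz' : z ∈ Ioo α β
    · exact (hlsc c ⟨le_rfl, hcd⟩ z hz fun _ => hz').add_continuousAt (hfc c le_rfl z) r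
        (hr.trans_le (hside c le_rfl z (hrow z hz)))
    · have hcorner : 0 ≤ g c z - L := by
        rcases hz.1.eq_or_lt with rfl | hαz
        · exact sub_nonneg.2 hgα
        · rw [hz.2.antisymm (not_lt.1 fun h => hz' ⟨hαz, h⟩)]
          exact sub_nonneg.2 hgβ
      filter_upwards [nhdsWithin_le_nhds ((hfc c le_rfl z).eventually
        (lt_mem_nhds (hr.trans_le hcorner))), nhdsWithin_prod (Ioc_mem_nhdsGT hcd) univ_mem]
        with p hp hpt
      exact hp.trans_le (le_add_of_nonneg_left (hu p.1 hpt.1 p.2))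

end BoxLemma

/-! ### Semicontinuity of nonnegative solutions -/

section FutureSemicontinuity

theorem exists_Ioo_disjoint_of_isClosed {S : Set ℝ} (hS : IsClosed S) {α₀ β₀ x : ℝ} (hα₀ : α₀ ∈ S)
    (hβ₀ : β₀ ∈ S) (hx : x ∈ Icc α₀ β₀) (hxS : x ∉ S) :
    ∃ α ∈ S, ∃ β ∈ S, x ∈ Ioo α β ∧ Ioo α β ⊆ Icc α₀ β₀ \ S := by
  obtain ⟨α, ⟨hαS, hα⟩, hαmax⟩ := (isCompact_Icc.inter_left hS).exists_isGreatest
    ⟨α₀, hα₀, left_mem_Icc.2 hx.1⟩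
  obtain ⟨β, ⟨hβS, hβ⟩, hβmin⟩ := (isCompact_Icc.inter_left hS).exists_isLeast
    ⟨β₀, hβ₀, right_mem_Icc.2 hx.2⟩
  refine ⟨α, hαS, β, hβS, ⟨hα.2.lt_of_ne fun h => hxS (h ▸ hαS),
    hβ.1.lt_of_ne fun h => hxS (h ▸ hβS)⟩, fun z hz => ⟨⟨hα.1.trans hz.1.le, hz.2.le.trans hβ.2⟩,
    fun hzS => ?_⟩⟩
  rcases le_total z x with h | h
  · exact hz.1.not_ge (hαmax ⟨hzS, hα.1.trans hz.1.le, h⟩)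
  · exact hz.2.not_ge (hβmin ⟨hzS, h, hz.2.le.trans hβ.2⟩)

variable {ν k : ℝ → ℝ} {W : ℝ} {u : ℝ → ℝ → ℝ}

/-- The row of the last time at which `F` meets the rectangle, together with the columns of the
points of `F` on it, cuts out boxes free of `F`. -/
theorem le_of_le_on_crosses (hνc : Continuous ν) (hν : ∀ x, 0 < ν x) (hkc : Continuous k)
    (hk : ∀ x, 0 < k x) {F : Set (ℝ × ℝ)} (hF : IsClosed F) {c₀ d α₀ β₀ L : ℝ} (hcd : c₀ ≤ d)
    (hL : 0 ≤ L)
    (hu : ∀ t ∈ Ioc c₀ d, ∀ x, 0 ≤ u t x)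
    (hsol : ∀ t ∈ Ioc c₀ d, ∀ x, HasParabolicOpAt ν k W u 0 t x)
    (hrow₀ : ∀ x ∈ Icc α₀ β₀, L ≤ u c₀ x)
    (hα₀ : ∀ t ∈ Icc c₀ d, L ≤ u t α₀) (hβ₀ : ∀ t ∈ Icc c₀ d, L ≤ u t β₀)
    (hrow : ∀ t ∈ Icc c₀ d, ∀ x ∈ Icc α₀ β₀, (t, x) ∈ F → ∀ ξ ∈ Icc α₀ β₀, L ≤ u t ξ)
    (hcol : ∀ t ∈ Icc c₀ d, ∀ x ∈ Icc α₀ β₀, (t, x) ∈ F → ∀ s ∈ Icc c₀ d, L ≤ u s x)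
    (hlsc : ∀ t ∈ Icc c₀ d, ∀ x ∈ Icc α₀ β₀, (t, x) ∉ F → FutureLSCAt u t x) :
    ∀ x ∈ Icc α₀ β₀, L ≤ u d x := by
  intro x hx
  have hFQ : IsCompact (F ∩ Icc c₀ d ×ˢ Icc α₀ β₀) :=
    (isCompact_Icc.prod isCompact_Icc).inter_left hF
  obtain ⟨c, hcmem, hcmax⟩ := ((hFQ.image continuous_fst).union
    (isCompact_singleton (x := c₀))).exists_isGreatest ⟨c₀, Or.inr rfl⟩
  obtain ⟨hc, hcrow⟩ : c ∈ Icc c₀ d ∧ ∀ ξ ∈ Icc α₀ β₀, L ≤ u c ξ := by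
    rcases hcmem with ⟨⟨t, z⟩, ⟨hzF, ht, hz⟩, rfl⟩ | rfl
    · exact ⟨ht, hrow t ht z hz hzF⟩
    · exact ⟨left_mem_Icc.2 hcd, hrow₀⟩
  have hlast : ∀ t ∈ Icc c₀ d, ∀ ξ ∈ Icc α₀ β₀, (t, ξ) ∈ F → t ≤ c := fun t ht ξ hξ hF =>
    hcmax (Or.inl ⟨(t, ξ), ⟨hF, ht, hξ⟩, rfl⟩)
  rcases hc.2.eq_or_lt with rfl | hcd'
  · exact hcrow x hx
  set S : Set ℝ := {ξ | (c, ξ) ∈ F} ∩ Icc α₀ β₀ ∪ {α₀, β₀}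
  have hS : IsClosed S := ((hF.preimage (by fun_prop)).inter isClosed_Icc).union
    (toFinite {α₀, β₀}).isClosed
  have hScol : ∀ ξ ∈ S, ∀ s ∈ Icc c₀ d, L ≤ u s ξ := by
    rintro ξ (⟨hξF, hξ⟩ | rfl | rfl) s hs
    exacts [hcol c hc ξ hξ hξF s hs, hα₀ s hs, hβ₀ s hs]
  by_cases hxS : x ∈ S
  · exact hScol x hxS d (right_mem_Icc.2 hcd)
  obtain ⟨α, hαS, β, hβS, hxαβ, hαβ⟩ :=
    exists_Ioo_disjoint_of_isClosed hS (Or.inr (Or.inl rfl)) (Or.inr (Or.inr rfl)) hx hxS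
  have hsub : Icc α β ⊆ Icc α₀ β₀ := by
    rw [← closure_Ioo (hxαβ.1.trans hxαβ.2).ne]
    exact closure_minimal (hαβ.trans sdiff_subset) isClosed_Icc
  have htime : Icc c d ⊆ Icc c₀ d := Icc_subset_Icc_left hc.1
  refine le_of_le_on_parabolicBoundary hνc hν hkc hk hcd' hL
    (fun t ht => hu t ⟨hc.1.trans_lt ht.1, ht.2⟩) (fun t ht => hsol t ⟨hc.1.trans_lt ht.1, ht.2⟩)
    (fun ξ hξ => hcrow ξ (hsub hξ)) (fun t ht => hScol α hαS t (htime (Ioc_subset_Icc_self ht)))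
    (fun t ht => hScol β hβS t (htime (Ioc_subset_Icc_self ht))) (fun t ht ξ hξ hcorner => ?_)
    x (Ioo_subset_Icc_self hxαβ)
  have htI : t ∈ Icc c₀ d := htime (Ico_subset_Icc_self ht)
  refine hlsc t htI ξ (hsub hξ) fun hξF => ?_
  obtain rfl : t = c := (hlast t htI ξ (hsub hξ) hξF).antisymm ht.1
  exact (hαβ (hcorner rfl)).2 (Or.inl ⟨hξF, hsub hξ⟩)

/-- Both partial functions of `u` at `(t, x)` are Lipschitz at that point, with constant `n` and up
to distance `1 / n`; only positive times are considered. -/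
def LipschitzCrossAt (u : ℝ → ℝ → ℝ) (n t x : ℝ) : Prop :=
  (∀ s, 0 < s → |s - t| < 1 / n → |u s x - u t x| ≤ n * |s - t|) ∧
    ∀ ξ, |ξ - x| < 1 / n → |u t ξ - u t x| ≤ n * |ξ - x|

namespace LipschitzCrossAt

variable {n t x δ : ℝ}

theorem abs_sub_time_le (h : LipschitzCrossAt u n t x) (hn : 0 < n) (hδ : δ < 1 / n) {s : ℝ}
    (hs : 0 < s) (hst : |s - t| ≤ δ) : |u s x - u t x| ≤ n * δ :=
  (h.1 s hs (hst.trans_lt hδ)).trans (mul_le_mul_of_nonneg_left hst hn.le)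

theorem abs_sub_space_le (h : LipschitzCrossAt u n t x) (hn : 0 < n) (hδ : δ < 1 / n) {ξ : ℝ}
    (hξ : |ξ - x| ≤ δ) : |u t ξ - u t x| ≤ n * δ :=
  (h.2 ξ (hξ.trans_lt hδ)).trans (mul_le_mul_of_nonneg_left hξ hn.le)

theorem of_tendsto (hn : 0 < n) (huc : ∀ t > 0, ∀ x, ContinuousAt (fun s => u s x) t)
    (hur : ∀ t > 0, Continuous (u t)) {τ y : ℕ → ℝ} (ht : 0 < t)
    (hτ : Tendsto τ atTop (𝓝 t)) (hy : Tendsto y atTop (𝓝 x))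
    (h : ∀ i, LipschitzCrossAt u n (τ i) (y i)) : LipschitzCrossAt u n t x := by
  have hdist : ∀ {z : ℕ → ℝ} {b : ℝ} (a : ℝ), Tendsto z atTop (𝓝 b) →
      Tendsto (fun i => |a - z i|) atTop (𝓝 |a - b|) := fun a hz => (hz.const_sub a).abs
  have hval : Tendsto (fun i => u (τ i) (y i)) atTop (𝓝 (u t x)) := by
    have hzero := hdist x hy
    rw [sub_self, abs_zero] at hzero
    have hdiff : Tendsto (fun i => u (τ i) x - u (τ i) (y i)) atTop (𝓝 0) := by
      refine squeeze_zero_norm' ?_ (by simpa only [mul_zero] using hzero.const_mul n)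
      filter_upwards [hzero.eventually_lt_const (one_div_pos.2 hn)] with i hi
      exact (h i).2 x hi
    simpa using ((huc t ht x).tendsto.comp hτ).sub hdiff
  refine ⟨fun s hs hst => ?_, fun ξ hξ => ?_⟩
  · refine le_of_tendsto_of_tendsto ((((hur s hs).tendsto x).comp hy).sub hval).abs
      ((hdist s hτ).const_mul n) ?_
    filter_upwards [(hdist s hτ).eventually_lt_const hst] with i hi
    exact (h i).1 s hs hi
  · refine le_of_tendsto_of_tendsto (((huc t ht ξ).tendsto.comp hτ).sub hval).abs
      ((hdist ξ hy).const_mul n) ?_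
    filter_upwards [(hdist ξ hy).eventually_lt_const hξ] with i hi
    exact (h i).2 ξ hi

end LipschitzCrossAt

theorem exists_nat_forall_lipschitz_at {f : ℝ → ℝ} {x : ℝ} (h : DifferentiableAt ℝ f x) :
    ∃ N : ℕ, ∀ n : ℕ, N ≤ n →
      ∀ s, |s - x| < 1 / (n + 1 : ℝ) → |f s - f x| ≤ (n + 1 : ℝ) * |s - x| := by
  obtain ⟨C, hC⟩ := h.isBigO_sub.bound
  obtain ⟨e, he, hball⟩ := Metric.eventually_nhds_iff.1 hC
  obtain ⟨N₁, hN₁⟩ := exists_nat_gt C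
  obtain ⟨N₂, hN₂⟩ := exists_nat_one_div_lt he
  refine ⟨max N₁ N₂, fun n hn s hs => (hball (hs.trans_le ?_)).trans ?_⟩
  · exact (Nat.one_div_le_one_div ((le_max_right _ _).trans hn)).trans hN₂.le
  · have hCn : C ≤ n + 1 := by
      have : (N₁ : ℝ) ≤ n := mod_cast (le_max_left _ _).trans hn
      linarith
    exact mul_le_mul_of_nonneg_right hCn (abs_nonneg _)

theorem le_of_lipschitzCrossAt (hνc : Continuous ν) (hν : ∀ x, 0 < ν x) (hkc : Continuous k)
    (hk : ∀ x, 0 < k x) (hu : ∀ t > 0, ∀ x, 0 ≤ u t x)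
    (hsol : ∀ t > 0, ∀ x, HasParabolicOpAt ν k W u 0 t x) {F : Set (ℝ × ℝ)} (hF : IsClosed F)
    {c d α β L n δ : ℝ} (hc : 0 < c) (hcd : c ≤ d) (hn : 0 < n) (hδ : δ < 1 / n)
    (hdδ : d - c ≤ δ) (hβδ : β - α ≤ δ) (hL : 0 ≤ L)
    (hrow : ∀ x ∈ Icc α β, L ≤ u c x)
    (hα : ∀ t ∈ Icc c d, L ≤ u t α) (hβ : ∀ t ∈ Icc c d, L + 2 * (n * δ) ≤ u t β)
    (hlsc : ∀ t ∈ Icc c d, ∀ x ∈ Icc α β, (t, x) ∉ F → FutureLSCAt u t x)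
    (hlip : ∀ t ∈ Icc c d, ∀ x ∈ Icc α β, (t, x) ∈ F → LipschitzCrossAt u n t x) :
    ∀ x ∈ Icc α β, L ≤ u d x := by
  have hδ0 : 0 ≤ n * δ := mul_nonneg hn.le ((sub_nonneg.2 hcd).trans hdδ)
  have hspace : ∀ x ∈ Icc α β, ∀ ξ ∈ Icc α β, |ξ - x| ≤ δ := fun x hx ξ hξ =>
    (abs_sub_le_of_le_of_le hξ.1 hξ.2 hx.1 hx.2).trans hβδ
  have hvalue : ∀ t ∈ Icc c d, ∀ x ∈ Icc α β, (t, x) ∈ F → L + n * δ ≤ u t x := by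
    intro t ht x hx hxF
    have := (hlip t ht x hx hxF).abs_sub_space_le hn hδ
      (hspace x hx β (right_mem_Icc.2 (hx.1.trans hx.2)))
    linarith [hβ t ht, (abs_le.1 this).2]
  refine le_of_le_on_crosses hνc hν hkc hk hF hcd hL (fun t ht => hu t (hc.trans ht.1))
    (fun t ht => hsol t (hc.trans ht.1)) hrow hα (fun t ht => by linarith [hβ t ht])
    (fun t ht x hx hxF ξ hξ => ?_) (fun t ht x hx hxF s hs => ?_) hlsc
  · have := (hlip t ht x hx hxF).abs_sub_space_le hn hδ (hspace x hx ξ hξ)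
    linarith [hvalue t ht x hx hxF, (abs_le.1 this).1]
  · have := (hlip t ht x hx hxF).abs_sub_time_le hn hδ (hc.trans_le hs.1)
      ((abs_sub_le_of_le_of_le hs.1 hs.2 ht.1 ht.2).trans hdδ)
    linarith [hvalue t ht x hx hxF, (abs_le.1 this).1]

theorem eventually_le_of_lipschitzCrossAt (hνc : Continuous ν) (hν : ∀ x, 0 < ν x)
    (hkc : Continuous k) (hk : ∀ x, 0 < k x) (hu : ∀ t > 0, ∀ x, 0 ≤ u t x)
    (hsol : ∀ t > 0, ∀ x, HasParabolicOpAt ν k W u 0 t x) {F : Set (ℝ × ℝ)} (hF : IsClosed F)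
    {t₀ x₀ n ρ : ℝ} (ht₀ : 0 < t₀) (hn : 0 < n) (hρ : 0 < ρ) (hρn : 2 * ρ < 1 / n)
    (hL : 0 ≤ u t₀ x₀ - 4 * (n * (2 * ρ))) (hcross : LipschitzCrossAt u n t₀ x₀)
    (hlsc : ∀ p ∈ Metric.closedBall (t₀, x₀) ρ, p ∉ F → FutureLSCAt u p.1 p.2)
    (hlip : ∀ p ∈ Metric.closedBall (t₀, x₀) ρ, p ∈ F → LipschitzCrossAt u n p.1 p.2) :
    ∀ᶠ p in 𝓝[Ioi t₀ ×ˢ univ] (t₀, x₀), u t₀ x₀ - 4 * (n * (2 * ρ)) ≤ uncurry u p := by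
  set m := u t₀ x₀
  have hnρ : 0 < n * (2 * ρ) := by positivity
  have hrow : ∀ ξ ∈ Icc (x₀ - ρ) (x₀ + ρ), m - n * (2 * ρ) ≤ u t₀ ξ := fun ξ hξ => by
    have := hcross.abs_sub_space_le hn hρn (ξ := ξ)
      (abs_le.2 ⟨by linarith [hξ.1], by linarith [hξ.2]⟩)
    linarith [(abs_le.1 this).1]
  have hside : ∀ ξ ∈ Icc (x₀ - ρ) (x₀ + ρ), ∀ᶠ t in 𝓝[≥] t₀, m - 2 * (n * (2 * ρ)) < u t ξ :=
    fun ξ hξ => nhdsWithin_le_nhds ((hsol t₀ ht₀ ξ).continuousAt_time.eventually_const_lt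
      (by linarith [hrow ξ hξ]))
  obtain ⟨τ, hτ : t₀ < τ, hτs⟩ := mem_nhdsGE_iff_exists_Icc_subset.1
    ((hside (x₀ - ρ) ⟨by linarith, by linarith⟩).and
      ((hside (x₀ + ρ) ⟨by linarith, by linarith⟩).and
        (Icc_mem_nhdsGE (lt_add_of_pos_right t₀ hρ))))
  rw [nhdsWithin_prod_eq, nhdsWithin_univ]
  filter_upwards [prod_mem_prod (Ioc_mem_nhdsGT hτ)
    (Icc_mem_nhds (sub_lt_self x₀ hρ) (lt_add_of_pos_right x₀ hρ))] with ⟨d, x⟩ ⟨hd, hx⟩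
  have hd' : ∀ t ∈ Icc t₀ d, t ∈ Icc t₀ τ := fun t ht => ⟨ht.1, ht.2.trans hd.2⟩
  have hQ : ∀ t ∈ Icc t₀ d, ∀ ξ ∈ Icc (x₀ - ρ) (x₀ + ρ),
      (t, ξ) ∈ Metric.closedBall (t₀, x₀) ρ := by
    intro t ht ξ hξ
    rw [← closedBall_prod_same, Real.closedBall_eq_Icc, Real.closedBall_eq_Icc]
    exact ⟨⟨by linarith [ht.1], (hτs (hd' t ht)).2.2.2⟩, hξ⟩
  have hdρ := (hτs (hd' d ⟨hd.1.le, le_rfl⟩)).2.2.2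
  exact le_of_lipschitzCrossAt hνc hν hkc hk hu hsol hF ht₀ hd.1.le hn hρn
    (by linarith) (by linarith) hL (fun ξ hξ => by linarith [hrow ξ hξ])
    (fun t ht => by linarith [(hτs (hd' t ht)).1]) (fun t ht => by linarith [(hτs (hd' t ht)).2.1])
    (fun t ht ξ hξ => hlsc _ (hQ t ht ξ hξ)) (fun t ht ξ hξ => hlip _ (hQ t ht ξ hξ)) x hx

theorem futureLSCAt_of_lipschitzCrossAt (hνc : Continuous ν) (hν : ∀ x, 0 < ν x)
    (hkc : Continuous k) (hk : ∀ x, 0 < k x) (hu : ∀ t > 0, ∀ x, 0 ≤ u t x)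
    (hsol : ∀ t > 0, ∀ x, HasParabolicOpAt ν k W u 0 t x) {F : Set (ℝ × ℝ)} (hF : IsClosed F)
    {t₀ x₀ n : ℝ} (hn : 0 < n) (ht₀ : 0 < t₀) (hmem : (t₀, x₀) ∈ F)
    (hlsc : ∀ p ∉ F, FutureLSCAt u p.1 p.2)
    (hlip : ∀ᶠ p in 𝓝 (t₀, x₀), p ∈ F → LipschitzCrossAt u n p.1 p.2) :
    FutureLSCAt u t₀ x₀ := by
  intro r hr
  rcases lt_or_ge r 0 with hr0 | hr0
  · filter_upwards [self_mem_nhdsWithin] with p hp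
    exact hr0.trans_le (hu p.1 (ht₀.trans hp.1) p.2)
  obtain ⟨e, he, hball⟩ := Metric.eventually_nhds_iff_ball.1 hlip
  have hsmall : ∀ᶠ ρ : ℝ in 𝓝[>] 0,
      ρ < e ∧ 2 * ρ < 1 / n ∧ r < u t₀ x₀ - 4 * (n * (2 * ρ)) :=
    nhdsWithin_le_nhds ((gt_mem_nhds he).and (((Continuous.tendsto' (by fun_prop) 0 0
      (by simp)).eventually_lt_const (one_div_pos.2 hn)).and
      ((Continuous.tendsto' (by fun_prop) 0 _ (by simp)).eventually_const_lt hr)))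
  obtain ⟨ρ, ⟨hρe, hρn, hρr⟩, hρ⟩ := (hsmall.and self_mem_nhdsWithin).exists
  have hlip' : ∀ p ∈ Metric.closedBall (t₀, x₀) ρ, p ∈ F → LipschitzCrossAt u n p.1 p.2 :=
    fun p hp => hball p (Metric.closedBall_subset_ball hρe hp)
  filter_upwards [eventually_le_of_lipschitzCrossAt hνc hν hkc hk hu hsol hF ht₀ hn hρ hρn
    (hr0.trans hρr.le) (hlip' _ (Metric.mem_closedBall_self (le_of_lt hρ)) hmem)
    (fun p _ => hlsc p) hlip'] with p hp
  exact hρr.trans_le hp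

/-- Baire's theorem: the sets of points with a fixed Lipschitz constant are closed and cover. -/
theorem exists_isOpen_forall_lipschitzCrossAt {E : Set (ℝ × ℝ)} (hE : IsLocallyClosed E)
    (hne : E.Nonempty) (hpos : ∀ p ∈ E, 0 < p.1)
    (hut : ∀ t > 0, ∀ x, DifferentiableAt ℝ (fun s => u s x) t)
    (hux : ∀ t > 0, Differentiable ℝ (u t)) :
    ∃ n > 0, ∃ U : Set (ℝ × ℝ), IsOpen U ∧ (E ∩ U).Nonempty ∧
      ∀ p ∈ E ∩ U, LipschitzCrossAt u n p.1 p.2 := by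
  have := hE.locallyCompactSpace
  have := hne.to_subtype
  let D : ℕ → Set E := fun n => {p | LipschitzCrossAt u (n + 1) p.1.1 p.1.2}
  have hD : ∀ n, IsClosed (D n) := fun n => IsSeqClosed.isClosed fun p q hp hpq => by
    have hpq' : Tendsto (fun i => (p i : ℝ × ℝ)) atTop (𝓝 (q : ℝ × ℝ)) :=
      (continuous_subtype_val.tendsto q).comp hpq
    exact LipschitzCrossAt.of_tendsto (by positivity) (fun t ht x => (hut t ht x).continuousAt)
      (fun t ht => (hux t ht).continuous) (hpos q q.2) ((continuous_fst.tendsto _).comp hpq')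
      ((continuous_snd.tendsto _).comp hpq') hp
  have hcover : ⋃ n, D n = univ := eq_univ_of_forall fun p => by
    obtain ⟨N₁, hN₁⟩ := exists_nat_forall_lipschitz_at (hut p.1.1 (hpos p p.2) p.1.2)
    obtain ⟨N₂, hN₂⟩ := exists_nat_forall_lipschitz_at (hux p.1.1 (hpos p p.2) p.1.2)
    exact mem_iUnion.2 ⟨max N₁ N₂, fun s _ => hN₁ _ (le_max_left _ _) s, hN₂ _ (le_max_right _ _)⟩
  obtain ⟨n, p, hp⟩ := nonempty_interior_of_iUnion_of_closed hD hcover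
  obtain ⟨U, hU, hUD⟩ := isOpen_induced_iff.1 (isOpen_interior (s := D n))
  refine ⟨n + 1, by positivity, U, hU, ⟨p, p.2, hUD.ge hp⟩, fun q hq => ?_⟩
  have hqD : (⟨q, hq.1⟩ : E) ∈ D n := interior_subset (hUD.le hq.2)
  exact hqD

/-- A pointwise solution is only separately continuous; nonnegativity yields the joint
semicontinuity needed for minimum principles. -/
theorem futureLSCAt_of_nonneg (hνc : Continuous ν) (hν : ∀ x, 0 < ν x) (hkc : Continuous k)
    (hk : ∀ x, 0 < k x) (hu : ∀ t > 0, ∀ x, 0 ≤ u t x)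
    (hsol : ∀ t > 0, ∀ x, HasParabolicOpAt ν k W u 0 t x) :
    ∀ t > 0, ∀ x, FutureLSCAt u t x := by
  set G : Set (ℝ × ℝ) := interior {p | FutureLSCAt u p.1 p.2}
  have hG : ∀ p ∈ G, FutureLSCAt u p.1 p.2 := fun p hp => interior_subset hp
  set E : Set (ℝ × ℝ) := Ioi 0 ×ˢ univ ∩ Gᶜ
  have hpos : IsOpen (Ioi (0 : ℝ) ×ˢ (univ : Set ℝ)) := isOpen_Ioi.prod isOpen_univ
  suffices ¬E.Nonempty from fun t ht x =>
    hG (t, x) (by_contra fun h => this ⟨(t, x), ⟨ht, trivial⟩, h⟩)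
  intro hne
  obtain ⟨n, hn, U, hU, ⟨p, hpE, hpU⟩, hlip⟩ := exists_isOpen_forall_lipschitzCrossAt (u := u)
    ⟨_, Gᶜ, hpos, isOpen_interior.isClosed_compl, rfl⟩ hne (fun p hp => hp.1.1)
    (fun t ht x => let ⟨_, h, _⟩ := hsol t ht x; h.differentiableAt)
    (fun t ht x => let ⟨_, _, h⟩ := hsol t ht x; h.differentiableAt)
  refine hpE.2 (mem_interior.2 ⟨U ∩ Ioi 0 ×ˢ univ, fun q hq => ?_, hU.inter hpos, hpU, hpE.1⟩)
  by_cases hqG : q ∈ G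
  · exact hG q hqG
  refine futureLSCAt_of_lipschitzCrossAt hνc hν hkc hk hu hsol isOpen_interior.isClosed_compl hn
    hq.2.1 hqG (fun p hp => hG p (not_not.1 hp)) ?_
  filter_upwards [(hU.inter hpos).mem_nhds hq] with p hp hpG
  exact hlip p ⟨⟨hp.2, hpG⟩, hp.1⟩

end FutureSemicontinuity

/-! ### Approximate semigroup orbits -/

section Yosida

theorem norm_exp_le_exp_norm {A : Type*} [NormedRing A] [NormOneClass A] [NormedAlgebra ℝ A]
    (B : A) : ‖NormedSpace.exp B‖ ≤ Real.exp ‖B‖ := by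
  have hsum : HasSum (fun n : ℕ => (n.factorial : ℝ)⁻¹ * ‖B‖ ^ n) (Real.exp ‖B‖) := by
    simpa only [Real.exp_eq_exp_ℝ, smul_eq_mul] using
      NormedSpace.exp_series_hasSum_exp' (𝕂 := ℝ) ‖B‖
  rw [NormedSpace.exp_eq_tsum ℝ]
  refine tsum_of_norm_bounded hsum fun n => ?_
  rw [norm_smul, Real.norm_of_nonneg (by positivity)]
  gcongr
  exact norm_pow_le B n

theorem norm_exp_smul_sub_one_le {A : Type*} [NormedRing A] [NormOneClass A] [NormedAlgebra ℝ A]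
    [CompleteSpace A] {N : A} (hN : ‖N‖ ≤ 1) {t : ℝ} (ht : 0 ≤ t) :
    ‖NormedSpace.exp (t • (N - 1))‖ ≤ 1 := by
  let : NormedAlgebra ℚ A := NormedAlgebra.restrictScalars ℚ ℝ A
  have hsplit : t • (N - 1) = t • N + algebraMap ℝ A (-t) := by
    rw [smul_sub, Algebra.algebraMap_eq_smul_one, neg_smul, sub_eq_add_neg]
  have hnorm : ‖t • N‖ ≤ t := by
    rw [norm_smul, Real.norm_of_nonneg ht]
    exact mul_le_of_le_one_right ht hN
  rw [hsplit, NormedSpace.exp_add_of_commute (Algebra.commutes _ _).symm,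
    ← NormedSpace.algebraMap_exp_comm, ← Real.exp_eq_exp_ℝ]
  calc ‖NormedSpace.exp (t • N) * algebraMap ℝ A (Real.exp (-t))‖
      ≤ ‖NormedSpace.exp (t • N)‖ * ‖algebraMap ℝ A (Real.exp (-t))‖ := norm_mul_le _ _
    _ ≤ Real.exp t * Real.exp (-t) := by
      rw [norm_algebraMap', Real.norm_of_nonneg (Real.exp_pos _).le]
      gcongr
      exact (norm_exp_le_exp_norm _).trans (Real.exp_le_exp.2 hnorm)
    _ = 1 := by rw [← Real.exp_add, add_neg_cancel, Real.exp_zero]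

variable {X : Type*} [NormedAddCommGroup X] [NormedSpace ℝ X] {G : X →L[ℝ] X}

/-- `G` behaves like the inverse of an accretive operator `A`: with `v = G z`, this reads
`‖l v‖ ≤ ‖A v + l v‖`. Working with `G` avoids unbounded operators. -/
def HasAccretiveInverse (G : X →L[ℝ] X) : Prop :=
  ∀ l : ℝ, 0 ≤ l → ∀ z, ‖l • G z‖ ≤ ‖z + l • G z‖

namespace HasAccretiveInverse

theorem norm_inv_le (hG : HasAccretiveInverse G) {l : ℝ} (hl : 0 ≤ l) {U : (X →L[ℝ] X)ˣ}
    (hU : (U : X →L[ℝ] X) = 1 + l • G) : ‖(↑U⁻¹ : X →L[ℝ] X)‖ ≤ 2 := by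
  refine ContinuousLinearMap.opNorm_le_bound _ zero_le_two fun z => ?_
  set y := (↑U⁻¹ : X →L[ℝ] X) z
  have hy : y + l • G y = z := by
    have : ((U : X →L[ℝ] X) * ↑U⁻¹) z = z := by rw [U.mul_inv]; rfl
    rwa [hU] at this
  calc ‖y‖ = ‖y + l • G y - l • G y‖ := by rw [add_sub_cancel_right]
    _ ≤ ‖y + l • G y‖ + ‖l • G y‖ := norm_sub_le _ _
    _ ≤ ‖z‖ + ‖z‖ := add_le_add (by rw [hy]) (by simpa only [hy] using hG l hl y)
    _ = 2 * ‖z‖ := (two_mul _).symm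

theorem isUnit_one_add_smul [CompleteSpace X] (hG : HasAccretiveInverse G) {l : ℝ} (hl : 0 ≤ l) :
    IsUnit (1 + l • G) := by
  obtain ⟨n, hn⟩ := exists_nat_gt (2 * (l * ‖G‖))
  have hn0 : (0 : ℝ) < n := lt_of_le_of_lt (by positivity) hn
  set δ := l / n
  have hδ : 0 ≤ δ := div_nonneg hl hn0.le
  suffices ∀ m : ℕ, IsUnit (1 + (m * δ) • G) by
    simpa only [δ, mul_div_cancel₀ l hn0.ne'] using this n
  intro m
  induction m with
  | zero => simp
  | succ m ih =>
    obtain ⟨U, hU⟩ := ih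
    have hsmall : ‖-((↑U⁻¹ : X →L[ℝ] X) * δ • G)‖ < 1 := by
      rw [norm_neg]
      calc _ ≤ ‖(↑U⁻¹ : X →L[ℝ] X)‖ * ‖δ • G‖ := norm_mul_le _ _
        _ ≤ 2 * (δ * ‖G‖) := by
          rw [norm_smul, Real.norm_of_nonneg hδ]
          gcongr
          exact hG.norm_inv_le (by positivity) hU
        _ = 2 * (l * ‖G‖) / n := by simp only [δ]; ring
        _ < 1 := (div_lt_one hn0).2 hn
    have hstep : 1 + ((m + 1 : ℕ) * δ) • G = U * (1 - -((↑U⁻¹ : X →L[ℝ] X) * δ • G)) := by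
      rw [sub_neg_eq_add, mul_add, mul_one, U.mul_inv_cancel_left, hU, add_assoc, ← add_smul]
      push_cast
      ring_nf
    rw [hstep]
    exact U.isUnit.mul (isUnit_one_sub_of_norm_lt_one hsmall)

theorem exists_resolvent [CompleteSpace X] (hG : HasAccretiveInverse G) {l : ℝ} (hl : 0 ≤ l) :
    ∃ J : X →L[ℝ] X, Commute G J ∧ ‖1 - J‖ ≤ 1 ∧ 1 - J = l • (J * G) := by
  obtain ⟨U, hU⟩ := hG.isUnit_one_add_smul hl
  have hcomm : Commute G (↑U⁻¹ : X →L[ℝ] X) := by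
    refine Commute.units_inv_right ?_
    rw [hU]
    exact (Commute.one_right G).add_right ((Commute.refl G).smul_right l)
  have hJ : 1 - (↑U⁻¹ : X →L[ℝ] X) = l • (↑U⁻¹ * G) := by
    rw [sub_eq_iff_eq_add', ← U.inv_mul, hU, mul_add, mul_one, mul_smul_comm]
  refine ⟨↑U⁻¹, hcomm, ContinuousLinearMap.opNorm_le_bound _ zero_le_one fun z => ?_, hJ⟩
  set y := (↑U⁻¹ : X →L[ℝ] X) z
  have hy : (1 - (↑U⁻¹ : X →L[ℝ] X)) z = l • G y := by
    rw [hJ, ← hcomm.eq]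
    rfl
  have hz : y + l • G y = z := by
    rw [← hy]
    exact add_sub_cancel y z
  rw [hy, one_mul]
  simpa only [hz] using hG l hl y

theorem norm_apply_comp_le {J : X →L[ℝ] X} {l : ℝ} (hl : 0 < l) (hJ : ‖1 - J‖ ≤ 1)
    (hJG : 1 - J = l • (J * G)) (z : X) : ‖J (G z)‖ ≤ ‖z‖ / l := by
  have h : l • J (G z) = (1 - J) z := by
    rw [hJG]
    rfl
  rw [le_div_iff₀' hl]
  calc l * ‖J (G z)‖ = ‖(1 - J) z‖ := by rw [← h, norm_smul, Real.norm_of_nonneg hl.le]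
    _ ≤ ‖z‖ := by simpa only [one_mul] using (1 - J).le_of_opNorm_le hJ z

theorem closure_range_subset [CompleteSpace X] (hG : HasAccretiveInverse G) :
    closure (range G) ⊆ closure (range fun z => G (G z)) := by
  refine closure_minimal ?_ isClosed_closure
  rintro _ ⟨z, rfl⟩
  refine Metric.mem_closure_iff.2 fun ε hε => ?_
  obtain ⟨l, hl⟩ := exists_gt (‖z‖ / ε)
  have hl0 : 0 < l := lt_of_le_of_lt (by positivity) hl
  obtain ⟨J, hcomm, hJ, hJG⟩ := hG.exists_resolvent hl0.le
  refine ⟨_, ⟨l • J z, rfl⟩, ?_⟩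
  have hz : G z - G (G (l • J z)) = J (G z) := by
    have hcomm' : ∀ v, G (J v) = J (G v) := fun v => DFunLike.congr_fun hcomm.eq v
    have := DFunLike.congr_fun hJG (G z)
    rw [map_smul, map_smul, hcomm', hcomm', sub_eq_iff_eq_add']
    exact (sub_eq_iff_eq_add.1 this)
  rw [dist_eq_norm, hz]
  exact (norm_apply_comp_le hl0 hJ hJG z).trans_lt ((div_lt_comm₀ hε hl0).1 hl)

/-- With `J = (1 + l G)⁻¹`, the Yosida approximation of `A = G⁻¹` is `l J`; its orbit
`exp (-t l J) G² h` solves `w' = -A w` up to `J G (exp (-t l J) h) = O(‖h‖ / l)`. -/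
theorem exists_approx_orbit [CompleteSpace X] [Nontrivial X] (hG : HasAccretiveInverse G) {f : X}
    (hf : f ∈ closure (range G)) {η : ℝ} (hη : 0 < η) :
    ∃ w w' g : ℝ → X, (∀ t, HasDerivAt w (w' t) t) ∧ (∀ t, w t = G (g t)) ∧ ‖w 0 - f‖ ≤ η ∧
      ∀ t, 0 ≤ t → ‖w' t + g t‖ ≤ η := by
  obtain ⟨_, ⟨h, rfl⟩, hh⟩ := Metric.mem_closure_iff.1 (hG.closure_range_subset hf) η hη
  obtain ⟨l, hl⟩ := exists_gt (‖h‖ / η)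
  have hl0 : 0 < l := lt_of_le_of_lt (by positivity) hl
  obtain ⟨J, hcomm, hJ, hJG⟩ := hG.exists_resolvent hl0.le
  set B : X →L[ℝ] X := l • (1 - J - 1)
  set E : ℝ → X →L[ℝ] X := fun t => NormedSpace.exp (t • B)
  have hE : ∀ t, 0 ≤ t → ‖E t h‖ ≤ ‖h‖ := fun t ht => by
    have := norm_exp_smul_sub_one_le hJ (mul_nonneg ht hl0.le)
    rw [mul_smul] at this
    simpa only [one_mul] using (E t).le_of_opNorm_le this h
  have hGE : ∀ t z, E t (G z) = G (E t z) := fun t z => by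
    have : Commute G (E t) := (((((Commute.one_right G).sub_right hcomm).sub_right
      (Commute.one_right G)).smul_right l).smul_right t).exp_right
    exact (DFunLike.congr_fun this.eq z).symm
  refine ⟨fun t => E t (G (G h)), fun t => B (E t (G (G h))), fun t => E t (G h), fun t => ?_,
    fun t => hGE t _, ?_, fun t ht => ?_⟩
  · exact ((hasDerivAt_exp_smul_const' (𝕂 := ℝ) B t).clm_apply (hasDerivAt_const t _)).congr_deriv
      (by rw [map_zero, add_zero]; rfl)
  · simp only [E, zero_smul, NormedSpace.exp_zero, one_apply_eq_self]
    rw [← dist_eq_norm, dist_comm]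
    exact hh.le
  · have hB : B (E t (G (G h))) + E t (G h) = J (G (E t h)) := by
      have := DFunLike.congr_fun hJG (E t (G h))
      have hBG : B (E t (G (G h))) = -(1 - J) (E t (G h)) := by
        rw [this]
        simp [B, hGE]
      rw [hBG, hGE]
      simp
    rw [hB]
    exact (norm_apply_comp_le hl0 hJ hJG _).trans (((div_le_div_of_nonneg_right (hE t ht)
      hl0.le).trans_lt ((div_lt_comm₀ hη hl0).1 hl)).le)

end HasAccretiveInverse

end Yosida

/-! ### The Dirichlet problem on an interval -/

section WeightedPrimitive

theorem norm_integral_mul_le {ρ : ℝ → ℝ} (hρ : Continuous ρ) (f : ℝ →ᵇ ℝ) {α x β : ℝ}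
    (hαx : α ≤ x) (hxβ : x ≤ β) :
    ‖∫ s in α..x, ρ s * f s‖ ≤ (∫ s in α..β, |ρ s|) * ‖f‖ := by
  have hint : ∀ a b, IntervalIntegrable (fun s => |ρ s| * ‖f‖) volume a b := fun a b =>
    (hρ.abs.mul continuous_const).intervalIntegrable a b
  rw [← intervalIntegral.integral_mul_const]
  refine (intervalIntegral.norm_integral_le_of_norm_le hαx (.of_forall fun s _ => ?_)
    (hint _ _)).trans (intervalIntegral.integral_mono_interval le_rfl hαx hxβ
      (.of_forall fun s => mul_nonneg (abs_nonneg _) (norm_nonneg f)) (hint _ _))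
  rw [norm_mul]
  exact mul_le_mul_of_nonneg_left (f.norm_coe_le_norm s) (norm_nonneg _)

/-- The operator `f ↦ ∫_α^x ρ f` for `x ∈ [α, β]`, extended by constants outside this interval. -/
noncomputable def weightedPrimitive {ρ : ℝ → ℝ} (hρ : Continuous ρ) (α β : ℝ) :
    (ℝ →ᵇ ℝ) →L[ℝ] (ℝ →ᵇ ℝ) :=
  have hbound (f : ℝ →ᵇ ℝ) (x : ℝ) :
      ‖∫ s in α..max α (min x β), ρ s * f s‖ ≤ (∫ s in α..max α β, |ρ s|) * ‖f‖ :=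
    norm_integral_mul_le hρ f (le_max_left _ _) (max_le_max le_rfl (min_le_right _ _))
  LinearMap.mkContinuous
    { toFun := fun f => BoundedContinuousFunction.ofNormedAddCommGroup
        (fun x => ∫ s in α..max α (min x β), ρ s * f s)
        ((intervalIntegral.continuous_primitive
          (fun _ _ => (hρ.mul f.continuous).intervalIntegrable _ _) α).comp (by fun_prop))
        ((∫ s in α..max α β, |ρ s|) * ‖f‖) (hbound f)
      map_add' := fun f g => by
        ext x
        simp only [BoundedContinuousFunction.coe_ofNormedAddCommGroup,
          BoundedContinuousFunction.coe_add, Pi.add_apply, mul_add]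
        exact intervalIntegral.integral_add ((hρ.mul f.continuous).intervalIntegrable _ _)
          ((hρ.mul g.continuous).intervalIntegrable _ _)
      map_smul' := fun c f => by
        ext x
        simp only [BoundedContinuousFunction.coe_ofNormedAddCommGroup,
          BoundedContinuousFunction.coe_smul, smul_eq_mul, RingHom.id_apply, mul_left_comm _ c,
          intervalIntegral.integral_const_mul] }
    (∫ s in α..max α β, |ρ s|) fun f =>
      BoundedContinuousFunction.norm_ofNormedAddCommGroup_le _
        (mul_nonneg (intervalIntegral.integral_nonneg (le_max_left _ _) fun s _ => abs_nonneg _)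
          (norm_nonneg f)) (hbound f)

variable {ρ : ℝ → ℝ} (hρ : Continuous ρ) {α β : ℝ} (f : ℝ →ᵇ ℝ) {x : ℝ}

theorem weightedPrimitive_apply (x : ℝ) :
    weightedPrimitive hρ α β f x = ∫ s in α..max α (min x β), ρ s * f s :=
  rfl

theorem weightedPrimitive_apply_of_mem (hx : x ∈ Icc α β) :
    weightedPrimitive hρ α β f x = ∫ s in α..x, ρ s * f s := by
  rw [weightedPrimitive_apply, min_eq_left hx.2, max_eq_right hx.1]

theorem weightedPrimitive_apply_of_le (hαβ : α ≤ β) (hx : x ≤ α) :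
    weightedPrimitive hρ α β f x = 0 := by
  rw [weightedPrimitive_apply, min_eq_left (hx.trans hαβ), max_eq_left hx,
    intervalIntegral.integral_same]

theorem weightedPrimitive_apply_of_ge (hαβ : α ≤ β) (hx : β ≤ x) :
    weightedPrimitive hρ α β f x = weightedPrimitive hρ α β f β := by
  rw [weightedPrimitive_apply, min_eq_right hx, max_eq_right hαβ,
    weightedPrimitive_apply_of_mem hρ f (right_mem_Icc.2 hαβ)]

theorem hasDerivAt_weightedPrimitive (hx : x ∈ Ioo α β) :
    HasDerivAt (weightedPrimitive hρ α β f) (ρ x * f x) x := by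
  refine (hasDerivAt_integral_of_continuous (hρ.mul f.continuous) α x).congr_of_eventuallyEq ?_
  filter_upwards [Ioo_mem_nhds hx.1 hx.2] with ξ hξ
  exact weightedPrimitive_apply_of_mem hρ f (Ioo_subset_Icc_self hξ)

theorem weightedPrimitive_eq_sub {F : ℝ → ℝ} (hF : ∀ y ∈ Icc α β, HasDerivAt F (ρ y * f y) y)
    (hx : x ∈ Icc α β) : weightedPrimitive hρ α β f x = F x - F α := by
  rw [weightedPrimitive_apply_of_mem hρ f hx]
  refine intervalIntegral.integral_eq_sub_of_hasDerivAt (fun y hy => ?_)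
    ((hρ.mul f.continuous).intervalIntegrable _ _)
  rw [uIcc_of_le hx.1] at hy
  exact hF y ⟨hy.1, hy.2.trans hx.2⟩

end WeightedPrimitive

section GreenOperator

variable {ν k : ℝ → ℝ} {W α β : ℝ}

/-- `G` solves the Dirichlet problem on `(α, β)`: `v = G z` vanishes outside `(α, β)` and
satisfies `-(k v')' + W v' = ν z` there. -/
structure IsGreenOperator (ν k : ℝ → ℝ) (W α β : ℝ) (G : (ℝ →ᵇ ℝ) →L[ℝ] (ℝ →ᵇ ℝ)) : Prop where
  eq_zero : ∀ z, ∀ x ∉ Ioo α β, G z x = 0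
  hasEllipticOpAt : ∀ z, ∀ x ∈ Ioo α β, HasEllipticOpAt k W (G z) (ν x * z x) x

theorem IsGreenOperator.neg_norm_le_smul {G : (ℝ →ᵇ ℝ) →L[ℝ] (ℝ →ᵇ ℝ)} (hν : ∀ x, 0 < ν x)
    (hk : ∀ x, 0 < k x) (hG : IsGreenOperator ν k W α β G) {l : ℝ} (hl : 0 < l) (z : ℝ →ᵇ ℝ)
    (x : ℝ) : -‖z + l • G z‖ ≤ (l • G z) x := by
  by_contra! hx
  set g := l • G z
  have hg0 : ∀ y ∉ Ioo α β, g y = 0 := fun y hy => by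
    simp [g, hG.eq_zero z y hy]
  have hmem : ∀ y, g y < -‖z + g‖ → y ∈ Ioo α β := fun y hy => by
    by_contra hy'
    rw [hg0 y hy'] at hy
    exact hy.not_ge (neg_nonpos.2 (norm_nonneg _))
  obtain ⟨ξ, -, hmin⟩ := isCompact_Icc.exists_isMinOn ⟨x, Ioo_subset_Icc_self (hmem x hx)⟩
    g.continuous.continuousOn
  have hgξ : g ξ < -‖z + g‖ := (hmin (Ioo_subset_Icc_self (hmem x hx))).trans_lt hx
  have hξ := hmem ξ hgξ
  have hop := ((hG.hasEllipticOpAt z ξ hξ).const_mul l).nonpos_of_isLocalMin hk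
    (hmin.isLocalMin (Icc_mem_nhds hξ.1 hξ.2))
  have hz : z ξ ≤ 0 := by
    by_contra! hz
    exact hop.not_gt (mul_pos hl (mul_pos (hν ξ) hz))
  have hnorm : -‖z + g‖ ≤ z ξ + g ξ := (abs_le.1 ((z + g).norm_coe_le_norm ξ)).1
  linarith

theorem IsGreenOperator.hasAccretiveInverse {G : (ℝ →ᵇ ℝ) →L[ℝ] (ℝ →ᵇ ℝ)} (hν : ∀ x, 0 < ν x)
    (hk : ∀ x, 0 < k x) (hG : IsGreenOperator ν k W α β G) : HasAccretiveInverse G := by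
  intro l hl z
  rcases hl.eq_or_lt with rfl | hl
  · simp only [zero_smul, add_zero, norm_zero, norm_nonneg]
  refine (BoundedContinuousFunction.norm_le (norm_nonneg _)).2 fun x => abs_le.2
    ⟨hG.neg_norm_le_smul hν hk hl z x, ?_⟩
  have hneg := hG.neg_norm_le_smul hν hk hl (-z) x
  rw [map_neg, smul_neg, ← neg_add, norm_neg] at hneg
  exact neg_le_neg_iff.1 hneg

theorem exists_polynomial_comp_near {X : Type*} [TopologicalSpace X] {σ f : C(X, ℝ)}
    (hσ : Injective σ) {K : Set X} (hK : IsCompact K) {ε : ℝ} (hε : 0 < ε) :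
    ∃ p : Polynomial ℝ, ∀ x ∈ K, |p.eval (σ x) - f x| < ε := by
  have hsep : (Algebra.adjoin ℝ {σ}).SeparatesPoints := fun x y hxy =>
    ⟨σ, ⟨σ, Algebra.self_mem_adjoin_singleton ℝ σ, rfl⟩, hσ.ne hxy⟩
  obtain ⟨g, hg, hgf⟩ :=
    ContinuousMap.exists_mem_subalgebra_near_continuous_of_isCompact_of_separatesPoints hsep f hK hε
  rw [Algebra.adjoin_singleton_eq_range_aeval] at hg
  obtain ⟨p, rfl⟩ := hg
  refine ⟨p, fun x hx => ?_⟩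
  simpa [Polynomial.aeval_continuousMap_apply] using hgf x hx

theorem exists_polynomial_comp_near_of_eq_zero {σ f : C(ℝ, ℝ)} (hσ : StrictMono σ) (hαβ : α < β)
    (hα : f α = 0) (hβ : f β = 0) {ε : ℝ} (hε : 0 < ε) :
    ∃ p : Polynomial ℝ, p.eval (σ α) = 0 ∧ p.eval (σ β) = 0 ∧
      ∀ x ∈ Icc α β, |p.eval (σ x) - f x| < ε := by
  obtain ⟨p, hp⟩ := exists_polynomial_comp_near (f := f) hσ.injective
    (isCompact_Icc (a := α) (b := β)) (half_pos hε)
  have hpα := hp α (left_mem_Icc.2 hαβ.le)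
  have hpβ := hp β (right_mem_Icc.2 hαβ.le)
  rw [hα, sub_zero] at hpα
  rw [hβ, sub_zero] at hpβ
  have hσαβ : 0 < σ β - σ α := sub_pos.2 (hσ hαβ)
  set c := (p.eval (σ β) - p.eval (σ α)) / (σ β - σ α)
  have hc : c * (σ β - σ α) = p.eval (σ β) - p.eval (σ α) := div_mul_cancel₀ _ hσαβ.ne'
  set q : Polynomial ℝ :=
    p - (Polynomial.C (p.eval (σ α)) + Polynomial.C c * (Polynomial.X - Polynomial.C (σ α)))
  have hq : ∀ y, q.eval y = p.eval y - (p.eval (σ α) + c * (y - σ α)) := fun y => by simp [q]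
  refine ⟨q, by rw [hq]; ring, by rw [hq, hc]; ring, fun x hx => ?_⟩
  set r := (σ x - σ α) / (σ β - σ α)
  have hr0 : 0 ≤ r := div_nonneg (sub_nonneg.2 (hσ.monotone hx.1)) hσαβ.le
  have hr1 : r ≤ 1 := (div_le_one hσαβ).2 (by linarith [hσ.monotone hx.2])
  have hlin : p.eval (σ α) + c * (σ x - σ α) = (1 - r) * p.eval (σ α) + r * p.eval (σ β) := by
    simp only [c, r]; field_simp; ring
  have hinterp : |(1 - r) * p.eval (σ α) + r * p.eval (σ β)| < ε / 2 := by
    have hconv := convex_ball (0 : ℝ) (ε / 2) (mem_ball_zero_iff.2 hpα) (mem_ball_zero_iff.2 hpβ)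
      (sub_nonneg.2 hr1) hr0 (sub_add_cancel 1 r)
    simpa only [mem_ball_zero_iff, smul_eq_mul, Real.norm_eq_abs] using hconv
  have hpx := hp x hx
  rw [hq, hlin, abs_lt] at *
  constructor <;> linarith

end GreenOperator

section DirichletProblem

variable {ν k : ℝ → ℝ} {W α β : ℝ}

theorem continuous_div_mul_scaleDensity (hνc : Continuous ν) (hkc : Continuous k)
    (hk : ∀ x, 0 < k x) : Continuous fun x => ν x / (k x * scaleDensity k W x) :=
  hνc.div (hkc.mul (continuous_scaleDensity hkc hk)) fun x =>
    (mul_pos (hk x) (scaleDensity_pos hk x)).ne'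

/-- The solution operator of the Dirichlet problem, by two integrations: with `s` the scale density,
`G z = c ∫_α^x s - ∫_α^x s ∫_α ν z / (k s)`, where `c` makes `G z` vanish at `β`. -/
noncomputable def greenOperator (W : ℝ) (hνc : Continuous ν) (hkc : Continuous k)
    (hk : ∀ x, 0 < k x) (α β : ℝ) : (ℝ →ᵇ ℝ) →L[ℝ] (ℝ →ᵇ ℝ) :=
  let K := weightedPrimitive (continuous_scaleDensity (W := W) hkc hk) α β
  let M := weightedPrimitive (continuous_div_mul_scaleDensity (W := W) hνc hkc hk) α β
  (BoundedContinuousFunction.evalCLM ℝ β ∘L K ∘L M).smulRight ((K 1 β)⁻¹ • K 1) - K ∘L M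

theorem weightedPrimitive_scaleDensity_one (hkc : Continuous k) (hk : ∀ x, 0 < k x) {x : ℝ}
    (hx : x ∈ Icc α β) : weightedPrimitive (continuous_scaleDensity (W := W) hkc hk) α β 1 x =
      scale k W x - scale k W α :=
  weightedPrimitive_eq_sub _ _ (fun y _ => (hasDerivAt_scale hkc hk y).congr_deriv
    (mul_one (scaleDensity k W y)).symm) hx

theorem greenOperator_apply (hνc : Continuous ν) (hkc : Continuous k) (hk : ∀ x, 0 < k x)
    (z : ℝ →ᵇ ℝ) (x : ℝ) :
    let K := weightedPrimitive (continuous_scaleDensity (W := W) hkc hk) α β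
    let M := weightedPrimitive (continuous_div_mul_scaleDensity (W := W) hνc hkc hk) α β
    greenOperator W hνc hkc hk α β z x = K (M z) β * (K 1 β)⁻¹ * K 1 x - K (M z) x := by
  simp [greenOperator, mul_assoc]

theorem isGreenOperator_greenOperator (hνc : Continuous ν) (hkc : Continuous k)
    (hk : ∀ x, 0 < k x) (hαβ : α < β) :
    IsGreenOperator ν k W α β (greenOperator W hνc hkc hk α β) where
  eq_zero z x hx := by
    have hσβ := sub_pos.2 (strictMono_scale (W := W) hkc hk hαβ)
    rw [← weightedPrimitive_scaleDensity_one hkc hk (right_mem_Icc.2 hαβ.le)] at hσβ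
    rw [greenOperator_apply]
    rcases le_or_gt x α with hxα | hxα
    · simp only [weightedPrimitive_apply_of_le _ _ hαβ.le hxα, mul_zero, sub_zero]
    · have hβx : β ≤ x := not_lt.1 fun h => hx ⟨hxα, h⟩
      rw [weightedPrimitive_apply_of_ge _ _ hαβ.le hβx,
        weightedPrimitive_apply_of_ge _ _ hαβ.le hβx, inv_mul_cancel_right₀ hσβ.ne', sub_self]
  hasEllipticOpAt z x hx := by
    set s := scaleDensity k W
    have hs : Continuous s := continuous_scaleDensity hkc hk
    have hm := continuous_div_mul_scaleDensity (W := W) hνc hkc hk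
    set K := weightedPrimitive hs α β
    set M := weightedPrimitive hm α β
    set c := K (M z) β * (K 1 β)⁻¹
    have hG : ∀ y ∈ Ioo α β, HasDerivAt (greenOperator W hνc hkc hk α β z)
        (s y * (c - M z y)) y := fun y hy => by
      refine ((((hasDerivAt_weightedPrimitive hs 1 hy).const_mul c).sub
        (hasDerivAt_weightedPrimitive hs (M z) hy)).congr_deriv ?_).congr_of_eventuallyEq
        (.of_forall (greenOperator_apply hνc hkc hk z))
      simp only [BoundedContinuousFunction.coe_one, Pi.one_apply]
      ring
    have hflux := (hasDerivAt_mul_scaleDensity (W := W) hkc hk x).mul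
      ((hasDerivAt_weightedPrimitive hm z hx).const_sub c)
    refine (HasEllipticOpAt.of_hasDerivAt (Filter.eventually_of_mem (Ioo_mem_nhds hx.1 hx.2) hG)
      (hflux.congr_of_eventuallyEq (.of_forall fun ξ => ?_))).congr_op ?_
    · simp only [Pi.mul_apply]; ring
    · have hk0 := (hk x).ne'
      have hs0 := (scaleDensity_pos (W := W) hk x).ne'
      simp only [s]
      field_simp
      ring

theorem greenOperator_apply_of_comp_scale (hνc : Continuous ν)
    (hkc : Continuous k) (hk : ∀ x, 0 < k x) (hαβ : α < β) {φ φ' φ'' : ℝ → ℝ}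
    (hφ : ∀ y, HasDerivAt φ (φ' y) y) (hφ' : ∀ y, HasDerivAt φ' (φ'' y) y)
    (hα : φ (scale k W α) = 0) (hβ : φ (scale k W β) = 0) {z : ℝ →ᵇ ℝ}
    (hz : ∀ x ∈ Icc α β, ν x * z x = -(φ'' (scale k W x) * (k x * scaleDensity k W x ^ 2)))
    {x : ℝ} (hx : x ∈ Icc α β) : greenOperator W hνc hkc hk α β z x = φ (scale k W x) := by
  have hσ := hasDerivAt_scale (W := W) hkc hk
  have hM := fun y hy => weightedPrimitive_eq_sub (α := α) (β := β) (x := y)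
    (continuous_div_mul_scaleDensity (W := W) hνc hkc hk) z (F := fun y => -φ' (scale k W y))
    (fun ξ hξ => ((hφ' _).comp ξ (hσ ξ)).neg.congr_deriv <| by
      have hk0 := (hk ξ).ne'
      have hs0 := (scaleDensity_pos (W := W) hk ξ).ne'
      rw [div_mul_eq_mul_div, hz ξ hξ]
      field_simp) hy
  have hK := fun y hy => weightedPrimitive_eq_sub (α := α) (β := β) (x := y)
    (continuous_scaleDensity (W := W) hkc hk)
    (weightedPrimitive (continuous_div_mul_scaleDensity (W := W) hνc hkc hk) α β z)
    (F := fun y => φ' (scale k W α) * scale k W y - φ (scale k W y))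
    (fun ξ hξ => (((hσ ξ).const_mul _).sub ((hφ _).comp ξ (hσ ξ))).congr_deriv <| by
      rw [hM ξ hξ]; ring) hy
  have hσβ := (sub_pos.2 (strictMono_scale (W := W) hkc hk hαβ)).ne'
  have hβmem := right_mem_Icc.2 hαβ.le
  rw [greenOperator_apply, hK β hβmem, hK x hx, weightedPrimitive_scaleDensity_one hkc hk hβmem,
    weightedPrimitive_scaleDensity_one hkc hk hx, hα, hβ]
  field_simp
  ring

theorem mem_closure_range_greenOperator (hνc : Continuous ν) (hν : ∀ x, 0 < ν x)
    (hkc : Continuous k) (hk : ∀ x, 0 < k x) (hαβ : α < β) {f : ℝ →ᵇ ℝ}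
    (hf : ∀ x ∉ Ioo α β, f x = 0) : f ∈ closure (range (greenOperator W hνc hkc hk α β)) := by
  refine Metric.mem_closure_range_iff.2 fun ε hε => ?_
  obtain ⟨p, hpα, hpβ, hp⟩ := exists_polynomial_comp_near_of_eq_zero
    (σ := ⟨scale k W, continuous_scale hkc hk⟩) (f := f.toContinuousMap) (strictMono_scale hkc hk)
    hαβ (hf α fun h => h.1.false) (hf β fun h => h.2.false) (half_pos hε)
  have hs : Continuous (scaleDensity k W) := continuous_scaleDensity hkc hk
  have hσ : Continuous (scale k W) := continuous_scale hkc hk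
  set h : C(ℝ, ℝ) := ⟨fun x => -(p.derivative.derivative.eval (scale k W x) *
    (k x * scaleDensity k W x ^ 2)) / ν x, .div (by fun_prop) hνc fun x => (hν x).ne'⟩
  set z : ℝ →ᵇ ℝ := (BoundedContinuousFunction.mkOfCompact (h.restrict (Icc α β))).compContinuous
    ⟨projIcc α β hαβ.le, continuous_projIcc⟩
  have hz : ∀ x ∈ Icc α β, ν x * z x =
      -(p.derivative.derivative.eval (scale k W x) * (k x * scaleDensity k W x ^ 2)) :=
    fun x hx => by
      simp only [z, BoundedContinuousFunction.compContinuous_apply, ContinuousMap.coe_mk,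
        BoundedContinuousFunction.mkOfCompact_apply, ContinuousMap.restrict_apply,
        projIcc_of_mem hαβ.le hx, h]
      exact mul_div_cancel₀ _ (hν x).ne'
  have hGz := fun x hx => greenOperator_apply_of_comp_scale hνc hkc hk hαβ (fun y => p.hasDerivAt y)
    (fun y => p.derivative.hasDerivAt y) hpα hpβ hz (x := x) hx
  refine ⟨z, ((BoundedContinuousFunction.dist_le (half_pos hε).le).2 fun x => ?_).trans_lt
    (half_lt_self hε)⟩
  by_cases hx : x ∈ Ioo α β
  · rw [hGz x (Ioo_subset_Icc_self hx), dist_comm]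
    exact (hp x (Ioo_subset_Icc_self hx)).le
  · rw [hf x hx, (isGreenOperator_greenOperator hνc hkc hk hαβ).eq_zero z x hx, dist_self]
    exact (half_pos hε).le

/-- `w` solves `ν ∂ₜw - (k w')' + W w' = 0` on `[0, ∞) × (α, β)`, with zero boundary values, up to
an error of size `η`: the elliptic operator sends `w t` to `ν * g t`, and `w' t` is only close to
`-g t`. -/
structure IsApproxDirichletSol (ν k : ℝ → ℝ) (W α β η : ℝ) (w w' g : ℝ → ℝ →ᵇ ℝ) : Prop where
  hasDerivAt : ∀ t, HasDerivAt w (w' t) t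
  eq_zero : ∀ t, ∀ x ∉ Ioo α β, w t x = 0
  hasEllipticOpAt : ∀ t, ∀ x ∈ Ioo α β, HasEllipticOpAt k W (w t) (ν x * g t x) x
  norm_le : ∀ t, 0 ≤ t → ‖w' t + g t‖ ≤ η

theorem exists_isApproxDirichletSol (hνc : Continuous ν) (hν : ∀ x, 0 < ν x)
    (hkc : Continuous k) (hk : ∀ x, 0 < k x) (hαβ : α < β) {f : ℝ →ᵇ ℝ}
    (hf : ∀ x ∉ Ioo α β, f x = 0) {η : ℝ} (hη : 0 < η) :
    ∃ w w' g, IsApproxDirichletSol ν k W α β η w w' g ∧ ‖w 0 - f‖ ≤ η := by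
  have : Nontrivial (ℝ →ᵇ ℝ) := ⟨0, 1, fun h => zero_ne_one (DFunLike.congr_fun h 0)⟩
  have hG := isGreenOperator_greenOperator (W := W) hνc hkc hk hαβ
  obtain ⟨w, w', g, hw, hwg, hw0, hnorm⟩ :=
    (hG.hasAccretiveInverse hν hk).exists_approx_orbit
      (mem_closure_range_greenOperator hνc hν hkc hk hαβ hf) hη
  exact ⟨w, w', g, ⟨hw, fun t x hx => hwg t ▸ hG.eq_zero (g t) x hx,
    fun t x hx => hwg t ▸ hG.hasEllipticOpAt (g t) x hx, hnorm⟩, hw0⟩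

variable {η : ℝ} {w w' g : ℝ → ℝ →ᵇ ℝ}

theorem IsApproxDirichletSol.hasDerivAt_apply (hw : IsApproxDirichletSol ν k W α β η w w' g)
    (t x : ℝ) : HasDerivAt (fun s => w s x) (w' t x) t :=
  (BoundedContinuousFunction.evalCLM (β := ℝ) ℝ x).hasFDerivAt.comp_hasDerivAt t (hw.hasDerivAt t)

theorem IsApproxDirichletSol.continuous (hw : IsApproxDirichletSol ν k W α β η w w' g) :
    Continuous w :=
  continuous_iff_continuousAt.2 fun t => (hw.hasDerivAt t).continuousAt

theorem IsApproxDirichletSol.neg (hw : IsApproxDirichletSol ν k W α β η w w' g) :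
    IsApproxDirichletSol ν k W α β η (-w) (-w') (-g) where
  hasDerivAt t := (hw.hasDerivAt t).neg
  eq_zero t x hx := by simp [hw.eq_zero t x hx]
  hasEllipticOpAt t x hx := by
    convert (hw.hasEllipticOpAt t x hx).const_mul (-1) using 1
    · ext ξ; simp
    · simp
  norm_le t ht := by
    rw [Pi.neg_apply, Pi.neg_apply, ← neg_add, norm_neg]
    exact hw.norm_le t ht

end DirichletProblem

section DirichletComparison

variable {ν k : ℝ → ℝ} {W α β η : ℝ} {w w' g : ℝ → ℝ →ᵇ ℝ} {u : ℝ → ℝ → ℝ} {c : ℝ}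

namespace IsApproxDirichletSol

theorem hasParabolicOpAt (hw : IsApproxDirichletSol ν k W α β η w w' g) (t : ℝ) {x : ℝ}
    (hx : x ∈ Ioo α β) :
    HasParabolicOpAt ν k W (fun t x => w (t - c) x) (ν x * (w' (t - c) x + g (t - c) x)) t x :=
  ⟨w' (t - c) x, (hw.hasDerivAt_apply (t - c) x).comp_sub_const t c,
    (hw.hasEllipticOpAt (t - c) x hx).congr_op (by ring)⟩

theorem add_apply_le (hw : IsApproxDirichletSol ν k W α β η w w' g) {t : ℝ} (ht : 0 ≤ t)
    (x : ℝ) : w' t x + g t x ≤ η :=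
  (le_abs_self _).trans (((w' t + g t).norm_coe_le_norm x).trans (hw.norm_le t ht))

theorem continuous_uncurry (hw : IsApproxDirichletSol ν k W α β η w w' g) :
    Continuous fun p : ℝ × ℝ => w p.1 p.2 :=
  (hw.continuous.comp continuous_fst).eval continuous_snd

theorem sub_mul_le (hν : ∀ x, 0 < ν x) (hk : ∀ x, 0 < k x)
    (hw : IsApproxDirichletSol ν k W α β η w w' g) (hη : 0 ≤ η)
    (hu : ∀ t, c < t → ∀ x, 0 ≤ u t x) (hsol : ∀ t, c < t → ∀ x, HasParabolicOpAt ν k W u 0 t x)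
    (hlsc : ∀ t, c ≤ t → ∀ x, FutureLSCAt u t x) (hinit : ∀ x ∈ Icc α β, w 0 x ≤ u c x + η)
    {t : ℝ} (ht : c ≤ t) {x : ℝ} (hx : x ∈ Icc α β) : w (t - c) x - η * (1 + (t - c)) ≤ u t x := by
  rcases ht.eq_or_lt with rfl | hct
  · simpa using hinit x hx
  refine le_of_forall_pos_sub_mul_le (C := t - c) fun ε hε => ?_
  set v : ℝ → ℝ → ℝ := fun s ξ => -1 * w (s - c) ξ + (η + (η + ε) * (s - c))
  have hvc : Continuous (uncurry v) := by
    have hwc : Continuous fun p : ℝ × ℝ => w (p.1 - c) p.2 :=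
      hw.continuous_uncurry.comp (f := fun p : ℝ × ℝ => (p.1 - c, p.2)) (by fun_prop)
    exact (continuous_const.mul hwc).add (by fun_prop)
  have hlsc' : ∀ s, c ≤ s → ∀ ξ, FutureLSCAt (fun s ξ => u s ξ + v s ξ) s ξ := fun s hs ξ =>
    (hlsc s hs ξ).add_continuousAt hvc.continuousAt
  have hv_nonneg : ∀ s, c < s → ∀ ξ ∉ Ioo α β, 0 ≤ u s ξ + v s ξ := fun s hs ξ hξ => by
    simp only [v, hw.eq_zero _ ξ hξ, mul_zero, zero_add]
    have := hu s hs ξ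
    have := mul_nonneg (add_nonneg hη hε.le) (sub_pos.2 hs).le
    linarith
  have hnonneg : 0 ≤ u t x + v t x := by
    refine nonneg_of_hasParabolicOpAt_pos (W := W) hν hk (c := c) (d := t) (α := α) (β := β)
      (w := fun s ξ => u s ξ + v s ξ) (fun s hs ξ hξ => ?_) (fun s hs => ?_)
      (fun s hs => hv_nonneg s hs.1 α fun h => h.1.false)
      (fun s hs => hv_nonneg s hs.1 β fun h => h.2.false)
      (fun s hs ξ _ => hlsc' s hs.1.le ξ) (fun ξ hξ r hr => ?_) t ⟨hct, le_rfl⟩ x hx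
    · have hlin : HasDerivAt (fun s => η + (η + ε) * (s - c)) (η + ε) s := by
        simpa using (((hasDerivAt_id s).sub_const c).const_mul (η + ε)).const_add η
      refine ⟨_, ?_,
        (hsol s hs.1 ξ).add (((hw.hasParabolicOpAt s hξ).const_mul (-1)).add_time hlin)⟩
      have := mul_pos (hν ξ) (show 0 < η + ε - (w' (s - c) ξ + g (s - c) ξ) by
        linarith [hw.add_apply_le (sub_pos.2 hs.1).le ξ])
      linarith
    · exact fun ξ _ => ((hsol s hs.1 ξ).continuousAt.add
        (hvc.comp (f := fun ξ => (s, ξ)) (by fun_prop)).continuousAt).continuousWithinAt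
    · refine hlsc' c le_rfl ξ r (hr.trans_le ?_)
      simp only [uncurry_apply_pair, v, sub_self]
      linarith [hinit ξ hξ]
  simp only [v] at hnonneg
  linarith

theorem neg_mul_le (hν : ∀ x, 0 < ν x) (hk : ∀ x, 0 < k x)
    (hw : IsApproxDirichletSol ν k W α β η w w' g) (hη : 0 ≤ η)
    (hinit : ∀ x ∈ Icc α β, -η ≤ w 0 x) {t : ℝ} (ht : 0 ≤ t) {x : ℝ} (hx : x ∈ Icc α β) :
    -(η * (1 + t)) ≤ w t x := by
  have hzero : ∀ t x, HasParabolicOpAt ν k W (fun _ _ => 0) 0 t x := fun t x =>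
    ⟨0, hasDerivAt_const t 0, (HasEllipticOpAt.const 0).congr_op (by ring)⟩
  have := hw.neg.sub_mul_le hν hk hη (u := fun _ _ => 0) (c := 0) (fun _ _ _ => le_rfl)
    (fun t _ x => hzero t x) (fun _ _ _ => lowerSemicontinuousWithinAt_const)
    (fun x hx => by simpa using neg_le.1 (hinit x hx)) ht hx
  simp only [sub_zero, Pi.neg_apply, BoundedContinuousFunction.coe_neg] at this
  linarith

end IsApproxDirichletSol

end DirichletComparison

/-! ### Comparison for the doubled mass -/

section MassComparison

variable {ν k : ℝ → ℝ} {W : ℝ}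

/-- `b` satisfies `∂ₜb + W (∂₁b + ∂₂b) ≤ ν(x) k(x) ∂₁∂₁b + ν(y) k(y) ∂₂∂₂b` at `(t, x, y)`, where
`∂₁ = ν(x)⁻¹ ∂ₓ` and `∂₂ = ν(y)⁻¹ ∂_y`. The masses `∫_y^x ν u` of solutions of
`ν ∂ₜu - (k u')' + W u' = 0` satisfy this with equality. The second derivatives are encoded as
`ν⁻¹ ∂ₓ(ν⁻¹ ∂ₓb) = -ℓ₁ / ν`. -/
def IsDoubledSubsolAt (ν k : ℝ → ℝ) (W : ℝ) (b : ℝ → ℝ → ℝ → ℝ) (t x y : ℝ) : Prop :=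
  ∃ bt ℓ₁ ℓ₂, HasDerivAt (fun s => b s x y) bt t ∧
    HasEllipticOpAt ν⁻¹ 0 (fun ξ => b t ξ y) ℓ₁ x ∧
    HasEllipticOpAt ν⁻¹ 0 (fun ξ => b t x ξ) ℓ₂ y ∧
    bt + W * (deriv (fun ξ => b t ξ y) x / ν x + deriv (fun ξ => b t x ξ) y / ν y) +
      (k x * ℓ₁ + k y * ℓ₂) ≤ 0

theorem continuous_intervalIntegral_of_continuous {X : Type*} [TopologicalSpace X]
    {f : X → ℝ → ℝ} {a b : X → ℝ} (hf : Continuous (uncurry f)) (ha : Continuous a)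
    (hb : Continuous b) : Continuous fun p => ∫ ξ in a p..b p, f p ξ := by
  have hint : ∀ p c d, IntervalIntegrable (f p) volume c d := fun p c d =>
    Continuous.intervalIntegrable (by fun_prop) c d
  simp only [← fun p => intervalIntegral.integral_interval_sub_left (hint p 0 (b p))
    (hint p 0 (a p))]
  exact (intervalIntegral.continuous_parametric_intervalIntegral_of_continuous hf hb).sub
    (intervalIntegral.continuous_parametric_intervalIntegral_of_continuous hf ha)

theorem integral_mul_sub_le_integral_mul (hνc : Continuous ν) (hν : ∀ x, 0 < ν x) {v v' : ℝ → ℝ}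
    (hv : Continuous v) (hv' : Continuous v') {α β δ x y : ℝ} (hδ : 0 ≤ δ) (hαy : α ≤ y)
    (hyx : y ≤ x) (hxβ : x ≤ β) (h : ∀ ξ ∈ Icc y x, v ξ - δ ≤ v' ξ) :
    (∫ ξ in y..x, ν ξ * v ξ) - δ * (∫ ξ in α..β, ν ξ) ≤ ∫ ξ in y..x, ν ξ * v' ξ := by
  have hmass : (∫ ξ in y..x, ν ξ) ≤ ∫ ξ in α..β, ν ξ :=
    intervalIntegral.integral_mono_interval hαy hyx hxβ (.of_forall fun ξ => (hν ξ).le)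
      (hνc.intervalIntegrable _ _)
  calc (∫ ξ in y..x, ν ξ * v ξ) - δ * (∫ ξ in α..β, ν ξ)
      ≤ (∫ ξ in y..x, ν ξ * v ξ) - δ * ∫ ξ in y..x, ν ξ := by gcongr
    _ = ∫ ξ in y..x, (ν ξ * v ξ - δ * ν ξ) := by
      rw [← intervalIntegral.integral_const_mul]
      exact (intervalIntegral.integral_sub ((hνc.mul hv).intervalIntegrable _ _)
        ((continuous_const.mul hνc).intervalIntegrable _ _)).symm
    _ ≤ ∫ ξ in y..x, ν ξ * v' ξ := by
      refine intervalIntegral.integral_mono_on hyx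
        (((hνc.mul hv).sub (continuous_const.mul hνc)).intervalIntegrable _ _)
        ((hνc.mul hv').intervalIntegrable _ _) fun ξ hξ => ?_
      nlinarith [mul_le_mul_of_nonneg_left (h ξ hξ) (hν ξ).le]

theorem hasEllipticOpAt_integral_mul (hνc : Continuous ν) (hν : ∀ x, 0 < ν x) {v : ℝ → ℝ}
    (hvc : Continuous v) {x : ℝ} (hv : DifferentiableAt ℝ v x) (y : ℝ) :
    HasEllipticOpAt ν⁻¹ 0 (fun ξ => ∫ z in y..ξ, ν z * v z) (-deriv v x) x := by
  refine (HasEllipticOpAt.of_hasDerivAt (.of_forall fun ξ =>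
    hasDerivAt_integral_of_continuous (hνc.mul hvc) y ξ) (q := deriv v x)
    (hv.hasDerivAt.congr_of_eventuallyEq (.of_forall fun ξ => ?_))).congr_op ?_
  · exact inv_mul_cancel_left₀ (hν ξ).ne' _
  · rw [zero_mul, zero_sub]

theorem hasEllipticOpAt_integral_mul_left (hνc : Continuous ν) (hν : ∀ x, 0 < ν x) {v : ℝ → ℝ}
    (hvc : Continuous v) {y : ℝ} (hv : DifferentiableAt ℝ v y) (x : ℝ) :
    HasEllipticOpAt ν⁻¹ 0 (fun ξ => ∫ z in ξ..x, ν z * v z) (deriv v y) y := by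
  simpa only [neg_one_mul, neg_neg, ← intervalIntegral.integral_symm] using
    (hasEllipticOpAt_integral_mul hνc hν hvc hv x).const_mul (-1)

theorem integral_eq_of_hasEllipticOpAt {v ℓ : ℝ → ℝ} {x y : ℝ} (hℓ : Continuous ℓ)
    (hv : ∀ ξ ∈ uIcc y x, HasEllipticOpAt k W v (ℓ ξ) ξ) :
    ∫ ξ in y..x, ℓ ξ = W * v x - k x * deriv v x - (W * v y - k y * deriv v y) :=
  intervalIntegral.integral_eq_sub_of_hasDerivAt (f := fun ξ => W * v ξ - k ξ * deriv v ξ)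
    (fun ξ hξ => (((hv ξ hξ).differentiableAt.hasDerivAt.const_mul W).sub
      (hv ξ hξ).2).congr_deriv (sub_sub_cancel _ _)) (hℓ.intervalIntegrable _ _)

namespace IsApproxDirichletSol

variable {α β η : ℝ} {w w' g : ℝ → ℝ →ᵇ ℝ}

theorem hasDerivAt_integral_mul (hνc : Continuous ν)
    (hw : IsApproxDirichletSol ν k W α β η w w' g) {x y : ℝ} (hyx : y ≤ x) (t : ℝ) :
    HasDerivAt (fun s => ∫ ξ in y..x, ν ξ * w s ξ) (∫ ξ in y..x, ν ξ * w' t ξ) t := by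
  have h := (BoundedContinuousFunction.evalCLM (β := ℝ) ℝ x ∘L
    weightedPrimitive hνc y x).hasFDerivAt.comp_hasDerivAt t (hw.hasDerivAt t)
  simpa only [ContinuousLinearMap.comp_apply, BoundedContinuousFunction.evalCLM_apply,
    weightedPrimitive_apply_of_mem hνc _ (right_mem_Icc.2 hyx), comp_def] using h

theorem neg_mul_sub_flux_le_integral_mul (hνc : Continuous ν) (hν : ∀ x, 0 < ν x)
    (hw : IsApproxDirichletSol ν k W α β η w w' g) (hη : 0 ≤ η) {t : ℝ} (ht : 0 ≤ t) {x y : ℝ}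
    (hαy : α < y) (hyx : y ≤ x) (hxβ : x < β) :
    -(η * ∫ ξ in α..β, ν ξ) - (W * w t x - k x * deriv (w t) x -
      (W * w t y - k y * deriv (w t) y)) ≤ ∫ ξ in y..x, ν ξ * w' t ξ := by
  have hflux := integral_eq_of_hasEllipticOpAt (k := k) (W := W) (v := w t)
    (hνc.mul (g t).continuous) (x := x) (y := y) fun ξ hξ => by
      rw [uIcc_of_le hyx] at hξ
      exact hw.hasEllipticOpAt t ξ ⟨hαy.trans_le hξ.1, hξ.2.trans_lt hxβ⟩
  have herror := integral_mul_sub_le_integral_mul hνc hν (v := fun ξ => -g t ξ)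
    (g t).continuous.neg (w' t).continuous hη hαy.le hyx hxβ.le fun ξ _ => by
      have := (abs_le.1 ((Real.norm_eq_abs _).symm.trans_le
        (((w' t + g t).norm_coe_le_norm ξ).trans (hw.norm_le t ht)))).1
      rw [BoundedContinuousFunction.coe_add, Pi.add_apply] at this
      linarith
  simp only [mul_neg, intervalIntegral.integral_neg] at herror
  simp only [Pi.mul_apply] at hflux
  linarith

theorem eventually_lt_left_of_isLocalMin_doubled (hνc : Continuous ν) (hν : ∀ x, 0 < ν x)
    (hk : ∀ x, 0 < k x) (hw : IsApproxDirichletSol ν k W α β η w w' g) (hη : 0 ≤ η)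
    {ε : ℝ} (hε : η * (∫ ξ in α..β, ν ξ) < ε) {b : ℝ → ℝ → ℝ → ℝ} {t x y : ℝ} (ht : 0 ≤ t)
    (hαy : α < y) (hyx : y < x) (hxβ : x < β) (hb : IsDoubledSubsolAt ν k W b t x y)
    {Φ : ℝ → ℝ × ℝ → ℝ}
    (hΦ : ∀ s X, Φ s X = (∫ ξ in X.2..X.1, ν ξ * w s ξ) + -1 * b s X.1 X.2 + ε * (1 + s))
    (hmin : IsLocalMin (Φ t) (x, y)) :
    ∀ᶠ s in 𝓝[<] t, Φ s (x, y) < Φ t (x, y) := by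
  obtain ⟨bt, ℓ₁, ℓ₂, hbt, hb₁, hb₂, hle⟩ := hb
  have hdiff : ∀ ξ ∈ Ioo α β, DifferentiableAt ℝ (w t) ξ := fun ξ hξ =>
    (hw.hasEllipticOpAt t ξ hξ).differentiableAt
  have hwc : Continuous (w t) := (w t).continuous
  have hν' : ∀ ξ, 0 < ν⁻¹ ξ := fun ξ => inv_pos.2 (hν ξ)
  have hmin₁ : IsLocalMin (fun ξ => Φ t (ξ, y)) x :=
    hmin.comp_continuous (g := fun ξ => (ξ, y)) (by fun_prop)
  have hmin₂ : IsLocalMin (fun ξ => Φ t (x, ξ)) y :=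
    hmin.comp_continuous (g := fun ξ => (x, ξ)) (by fun_prop)
  simp only [hΦ] at hmin₁ hmin₂
  have hmass₁ := hasEllipticOpAt_integral_mul hνc hν hwc (hdiff x ⟨hαy.trans hyx, hxβ⟩) y
  have hmass₂ := hasEllipticOpAt_integral_mul_left hνc hν hwc (hdiff y ⟨hαy, hyx.trans hxβ⟩) x
  have hsecond₁ := ((hmass₁.add (hb₁.const_mul (-1))).add_const _).nonpos_of_isLocalMin hν' hmin₁
  have hsecond₂ := ((hmass₂.add (hb₂.const_mul (-1))).add_const _).nonpos_of_isLocalMin hν' hmin₂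
  have hfirst₁ : ν x * w t x - deriv (fun ξ => b t ξ y) x = 0 := by
    rw [← hmin₁.hasDerivAt_eq_zero (((hasDerivAt_integral_of_continuous (hνc.mul hwc) y x).add
      (hb₁.differentiableAt.hasDerivAt.const_mul (-1))).add_const _)]
    simp only [Pi.mul_apply]; ring
  have hfirst₂ : -(ν y * w t y) - deriv (fun ξ => b t x ξ) y = 0 := by
    rw [← hmin₂.hasDerivAt_eq_zero (((intervalIntegral.integral_hasDerivAt_left
      ((hνc.mul hwc).intervalIntegrable _ _) ((hνc.mul hwc).stronglyMeasurableAtFilter _ _)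
      (hνc.mul hwc).continuousAt).add
      (hb₂.differentiableAt.hasDerivAt.const_mul (-1))).add_const _)]
    simp only [Pi.mul_apply]; ring
  rw [← sub_eq_zero.1 hfirst₁, ← sub_eq_zero.1 hfirst₂, mul_div_cancel_left₀ _ (hν x).ne',
    neg_div, mul_div_cancel_left₀ _ (hν y).ne'] at hle
  simp only [hΦ]
  refine eventually_lt_left_of_hasDerivAt_pos (((hw.hasDerivAt_integral_mul hνc hyx.le t).add
    (hbt.const_mul (-1))).add (((hasDerivAt_id t).const_add 1).const_mul ε)) ?_
  have := hw.neg_mul_sub_flux_le_integral_mul hνc hν hη ht hαy hyx.le hxβ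
  have := mul_le_mul_of_nonneg_left hsecond₁ (hk x).le
  have := mul_le_mul_of_nonneg_left hsecond₂ (hk y).le
  linarith

theorem neg_le_integral_mul (hνc : Continuous ν) (hν : ∀ x, 0 < ν x) (hk : ∀ x, 0 < k x)
    (hw : IsApproxDirichletSol ν k W α β η w w' g) (hη : 0 ≤ η)
    (hw₀ : ∀ x ∈ Icc α β, -η ≤ w 0 x) {t τ : ℝ} (ht : t ∈ Icc 0 τ) {x y : ℝ} (hαy : α ≤ y)
    (hyx : y ≤ x) (hxβ : x ≤ β) :
    -(η * (1 + τ) * ∫ ξ in α..β, ν ξ) ≤ ∫ ξ in y..x, ν ξ * w t ξ := by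
  have ht₀ := ht.1
  have hM : 0 ≤ ∫ ξ in α..β, ν ξ :=
    intervalIntegral.integral_nonneg (hαy.trans (hyx.trans hxβ)) fun ξ _ => (hν ξ).le
  calc -(η * (1 + τ) * ∫ ξ in α..β, ν ξ) ≤ -(η * (1 + t) * ∫ ξ in α..β, ν ξ) := by
        have := ht.2
        gcongr
    _ = (∫ ξ in y..x, ν ξ * 0) - η * (1 + t) * ∫ ξ in α..β, ν ξ := by
        simp only [mul_zero, intervalIntegral.integral_zero, zero_sub]
    _ ≤ ∫ ξ in y..x, ν ξ * w t ξ :=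
        integral_mul_sub_le_integral_mul hνc hν continuous_const (w t).continuous (by positivity)
          hαy hyx hxβ fun ξ hξ => (zero_sub _).trans_le
            (hw.neg_mul_le hν hk hη hw₀ ht₀ ⟨hαy.trans hξ.1, hξ.2.trans hxβ⟩)

theorem continuous_integral_mul_uncurry (hνc : Continuous ν)
    (hw : IsApproxDirichletSol ν k W α β η w w' g) :
    Continuous fun p : ℝ × ℝ × ℝ => ∫ ξ in p.2.2..p.2.1, ν ξ * w p.1 ξ :=
  continuous_intervalIntegral_of_continuous ((hνc.comp continuous_snd).mul
    (hw.continuous_uncurry.comp (f := fun q : (ℝ × ℝ × ℝ) × ℝ => (q.1.1, q.2)) (by fun_prop)))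
    (by fun_prop) (by fun_prop)

theorem le_integral_mul_add (hνc : Continuous ν) (hν : ∀ x, 0 < ν x) (hk : ∀ x, 0 < k x)
    (hw : IsApproxDirichletSol ν k W α β η w w' g) (hη : 0 ≤ η)
    (hw₀ : ∀ x ∈ Icc α β, -η ≤ w 0 x) {ε τ : ℝ} (hε : η * (1 + τ) * (∫ ξ in α..β, ν ξ) < ε)
    {b : ℝ → ℝ → ℝ → ℝ} (hbc : Continuous fun p : ℝ × ℝ × ℝ => b p.1 p.2.1 p.2.2)
    (hb : ∀ t ∈ Ioc 0 τ, ∀ x y, 0 < b t x y →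
      α < y ∧ y < x ∧ x < β ∧ IsDoubledSubsolAt ν k W b t x y)
    (hinit : ∀ x ∈ Icc α β, ∀ y ∈ Icc α β, y ≤ x → 0 < b 0 x y →
      b 0 x y ≤ (∫ ξ in y..x, ν ξ * w 0 ξ) + ε) {t : ℝ} (ht : t ∈ Ioc 0 τ) {x y : ℝ}
    (hαy : α ≤ y) (hyx : y ≤ x) (hxβ : x ≤ β) :
    b t x y ≤ (∫ ξ in y..x, ν ξ * w t ξ) + ε * (1 + t) := by
  have hM : 0 ≤ ∫ ξ in α..β, ν ξ :=
    intervalIntegral.integral_nonneg (hαy.trans (hyx.trans hxβ)) fun ξ _ => (hν ξ).le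
  have hτ : 0 < τ := ht.1.trans_le ht.2
  have hε_pos : 0 < ε := hε.trans_le' (by positivity)
  have hηM : η * (∫ ξ in α..β, ν ξ) < ε := hε.trans_le' (by
    gcongr
    exact le_mul_of_one_le_right hη (by linarith))
  have hmass : ∀ s ∈ Icc 0 τ, ∀ X ∈ {X : ℝ × ℝ | X.2 ≤ X.1} ∩ Icc α β ×ˢ Icc α β,
      -ε < ∫ ξ in X.2..X.1, ν ξ * w s ξ := fun s hs X hX =>
    (neg_lt_neg hε).trans_le (hw.neg_le_integral_mul hνc hν hk hη hw₀ hs hX.2.2.1 hX.1 hX.2.1.2)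
  set Φ : ℝ → ℝ × ℝ → ℝ := fun s X =>
    (∫ ξ in X.2..X.1, ν ξ * w s ξ) + -1 * b s X.1 X.2 + ε * (1 + s) with hΦ
  have hΦc : Continuous (uncurry Φ) :=
    ((hw.continuous_integral_mul_uncurry hνc).add (continuous_const.mul hbc)).add (by fun_prop)
  have hK : IsCompact ({X : ℝ × ℝ | X.2 ≤ X.1} ∩ Icc α β ×ˢ Icc α β) :=
    (isCompact_Icc.prod isCompact_Icc).inter_left (isClosed_le continuous_snd continuous_fst)
  have hnonneg : 0 ≤ Φ t (x, y) := by
    refine nonneg_of_forall_negative_min hK (c := 0) (d := τ)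
      (fun s _ => (hΦc.comp (f := fun X => (s, X)) (by fun_prop)).continuousOn)
      (fun s hs X hX hneg hmin => ?_)
      (fun s _ X _ => hΦc.lowerSemicontinuous.lowerSemicontinuousWithinAt _ _)
      (fun X hX r hr => hΦc.continuousWithinAt.eventually (lt_mem_nhds ?_)) t ht (x, y)
      ⟨hyx, ⟨hαy.trans hyx, hxβ⟩, hαy, hyx.trans hxβ⟩
    · have hpos : 0 < b s X.1 X.2 := by
        have := hmass s ⟨hs.1.le, hs.2⟩ X hX
        have := mul_pos hε_pos hs.1
        change (∫ ξ in X.2..X.1, ν ξ * w s ξ) + -1 * b s X.1 X.2 + ε * (1 + s) < 0 at hneg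
        linarith
      obtain ⟨hα, hlt, hβ, hsub⟩ := hb s hs X.1 X.2 hpos
      have hnhds : {X : ℝ × ℝ | X.2 ≤ X.1} ∩ Icc α β ×ˢ Icc α β ∈ 𝓝 X :=
        inter_mem ((continuousAt_snd.eventually_lt continuousAt_fst hlt).mono fun _ => le_of_lt)
          (prod_mem_nhds (Icc_mem_nhds (hα.trans hlt) hβ) (Icc_mem_nhds hα (hlt.trans hβ)))
      exact ((hw.eventually_lt_left_of_isLocalMin_doubled hνc hν hk hη hηM hs.1.le hα hlt hβ hsub
        (fun _ _ => rfl) (hmin.isLocalMin hnhds)).mono fun _ => le_of_lt).frequently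
    · refine hr.trans_le ?_
      have := hmass 0 ⟨le_rfl, hτ.le⟩ X hX
      simp only [uncurry_apply_pair, hΦ]
      rcases le_or_gt (b 0 X.1 X.2) 0 with h | h
      · linarith
      · linarith [hinit X.1 hX.2.1 X.2 hX.2.2 hX.1 h]
  simp only [hΦ] at hnonneg
  linarith

end IsApproxDirichletSol

theorem le_integral_mul_of_isDoubledSubsolAt (hνc : Continuous ν) (hν : ∀ x, 0 < ν x)
    (hkc : Continuous k) (hk : ∀ x, 0 < k x) {u : ℝ → ℝ → ℝ} {c τ α β : ℝ} (hτ : 0 < τ)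
    (hu : ∀ t, c < t → ∀ x, 0 ≤ u t x) (hsol : ∀ t, c < t → ∀ x, HasParabolicOpAt ν k W u 0 t x)
    (hlsc : ∀ t, c ≤ t → ∀ x, FutureLSCAt u t x) {f : ℝ →ᵇ ℝ} (hf : ∀ x ∉ Ioo α β, f x = 0)
    (hf₀ : ∀ x, 0 ≤ f x) (hfu : ∀ x, f x ≤ u c x) {b : ℝ → ℝ → ℝ → ℝ}
    (hbc : Continuous fun p : ℝ × ℝ × ℝ => b p.1 p.2.1 p.2.2)
    (hb : ∀ t ∈ Ioc 0 τ, ∀ x y, 0 < b t x y →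
      α < y ∧ y < x ∧ x < β ∧ IsDoubledSubsolAt ν k W b t x y)
    (hinit : ∀ x ∈ Icc α β, ∀ y ∈ Icc α β, y ≤ x → 0 < b 0 x y →
      b 0 x y ≤ ∫ ξ in y..x, ν ξ * f ξ) {x y : ℝ} (hαy : α < y) (hyx : y ≤ x) (hxβ : x < β) :
    b τ x y ≤ ∫ ξ in y..x, ν ξ * u (c + τ) ξ := by
  refine le_of_forall_pos_sub_mul_le (C := 2 + τ) fun ε hε => ?_
  obtain ⟨η, hη, hηε⟩ := exists_pos_mul_lt hε ((1 + τ) * ∫ ξ in α..β, ν ξ)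
  replace hηε : η * (1 + τ) * (∫ ξ in α..β, ν ξ) < ε := by linarith
  obtain ⟨w, w', g, hw, hw₀⟩ := exists_isApproxDirichletSol (W := W) hνc hν hkc hk
    (hαy.trans (hyx.trans_lt hxβ)) hf hη
  have hwf : ∀ ξ, |w 0 ξ - f ξ| ≤ η := fun ξ => ((w 0 - f).norm_coe_le_norm ξ).trans hw₀
  have hM : 0 ≤ ∫ ξ in α..β, ν ξ := intervalIntegral.integral_nonneg
    (hαy.trans (hyx.trans_lt hxβ)).le fun ξ _ => (hν ξ).le
  have hηM : η * (∫ ξ in α..β, ν ξ) ≤ ε := hηε.le.trans' (by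
    gcongr
    exact le_mul_of_one_le_right hη.le (by linarith))
  have huc : Continuous (u (c + τ)) := continuous_iff_continuousAt.2 fun ξ =>
    (hsol (c + τ) (by linarith) ξ).continuousAt
  have hcomparison : b τ x y ≤ (∫ ξ in y..x, ν ξ * w τ ξ) + ε * (1 + τ) := by
    refine hw.le_integral_mul_add hνc hν hk hη.le
      (fun ξ _ => by linarith [(abs_le.1 (hwf ξ)).1, hf₀ ξ]) hηε hbc hb
      (fun x hx y hy hyx hpos => ?_) ⟨hτ, le_rfl⟩ hαy.le hyx hxβ.le
    have := integral_mul_sub_le_integral_mul hνc hν f.continuous (w 0).continuous hη.le hy.1 hyx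
      hx.2 fun ξ _ => by linarith [(abs_le.1 (hwf ξ)).1]
    linarith [hinit x hx y hy hyx hpos]
  have hsolution : (∫ ξ in y..x, ν ξ * w τ ξ) - η * (1 + τ) * (∫ ξ in α..β, ν ξ) ≤
      ∫ ξ in y..x, ν ξ * u (c + τ) ξ := by
    refine integral_mul_sub_le_integral_mul hνc hν (w τ).continuous huc (by positivity) hαy.le
      hyx hxβ.le fun ξ hξ => ?_
    have := hw.sub_mul_le hν hk hη.le hu hsol hlsc
      (fun ξ _ => by linarith [(abs_le.1 (hwf ξ)).2, hfu ξ]) (t := c + τ) (by linarith)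
      ⟨hαy.le.trans hξ.1, hξ.2.trans hxβ.le⟩
    rwa [add_sub_cancel_left] at this
  linarith

end MassComparison

/-! ### The moving Gaussian bump -/

section MovingBump

variable {ν k N c₁ c₂ : ℝ → ℝ} {W lam Lam g r κ θ s x y V₁ V₂ : ℝ}

/-- The barrier of the doubled equation: a Gaussian bump in the mass coordinates `N x`, `N y`,
centred at `(c₁ s, c₂ s)`, lowered so as to be positive exactly at distance less than `√2 r` from
its centre, and decaying in time at rate `κ`. -/
noncomputable def movingBump (N c₁ c₂ : ℝ → ℝ) (g r κ θ s x y : ℝ) : ℝ :=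
  θ * Real.exp (-(κ * s)) *
    (Real.exp (g * (2 * r ^ 2 - (N x - c₁ s) ^ 2 - (N y - c₂ s) ^ 2)) - 1)

theorem movingBump_swap (N c₁ c₂ : ℝ → ℝ) (g r κ θ s x y : ℝ) :
    movingBump N c₁ c₂ g r κ θ s x y = movingBump N c₂ c₁ g r κ θ s y x := by
  simp only [movingBump, sub_right_comm]

theorem sq_add_sq_lt_of_movingBump_pos (hg : 0 ≤ g) (hθ : 0 ≤ θ)
    (h : 0 < movingBump N c₁ c₂ g r κ θ s x y) :
    (N x - c₁ s) ^ 2 + (N y - c₂ s) ^ 2 < 2 * r ^ 2 := by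
  have hexp := pos_of_mul_pos_right h (by positivity)
  rw [sub_pos, Real.one_lt_exp_iff] at hexp
  linarith [pos_of_mul_pos_right hexp hg]

theorem abs_lt_of_movingBump_pos (hg : 0 ≤ g) (hr : 0 < r) (hθ : 0 ≤ θ)
    (h : 0 < movingBump N c₁ c₂ g r κ θ s x y) :
    |N x - c₁ s| < 2 * r ∧ |N y - c₂ s| < 2 * r ∧ |N x - c₁ s - (N y - c₂ s)| < 2 * r := by
  have hlt := sq_add_sq_lt_of_movingBump_pos hg hθ h
  set p := N x - c₁ s
  set q := N y - c₂ s
  refine ⟨abs_lt_of_sq_lt_sq ?_ (by positivity), abs_lt_of_sq_lt_sq ?_ (by positivity),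
    abs_lt_of_sq_lt_sq ?_ (by positivity)⟩
  all_goals linarith [sq_nonneg p, sq_nonneg q, sq_nonneg (p + q), sq_nonneg r]

theorem hasDerivAt_movingBump_time {c₁' c₂' : ℝ} (hc₁ : HasDerivAt c₁ c₁' s)
    (hc₂ : HasDerivAt c₂ c₂' s) (x y : ℝ) :
    HasDerivAt (fun s => movingBump N c₁ c₂ g r κ θ s x y)
      (θ * Real.exp (-(κ * s)) *
        (Real.exp (g * (2 * r ^ 2 - (N x - c₁ s) ^ 2 - (N y - c₂ s) ^ 2)) *
          (2 * g * ((N x - c₁ s) * c₁' + (N y - c₂ s) * c₂'))) -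
        κ * movingBump N c₁ c₂ g r κ θ s x y) s := by
  have hdecay := (((hasDerivAt_id s).const_mul κ).fun_neg.exp).const_mul θ
  have hp := ((hc₁.const_sub (N x)).fun_pow 2).const_sub (2 * r ^ 2)
  have hbump := ((hp.fun_sub ((hc₂.const_sub (N y)).fun_pow 2)).const_mul g).exp.sub_const 1
  refine (hdecay.fun_mul hbump).congr_deriv ?_
  simp only [movingBump, id]
  push_cast
  ring

theorem hasDerivAt_movingBump (hN : HasDerivAt N (ν x) x) :
    HasDerivAt (fun x => movingBump N c₁ c₂ g r κ θ s x y)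
      (ν x * (θ * Real.exp (-(κ * s)) * (-(2 * g * (N x - c₁ s)) *
        Real.exp (g * (2 * r ^ 2 - (N x - c₁ s) ^ 2 - (N y - c₂ s) ^ 2))))) x := by
  have hp := ((hN.sub_const (c₁ s)).fun_pow 2).const_sub (2 * r ^ 2)
  refine ((((hp.sub_const ((N y - c₂ s) ^ 2)).const_mul g).exp.sub_const 1).const_mul
    (θ * Real.exp (-(κ * s)))).congr_deriv ?_
  push_cast
  ring

theorem hasEllipticOpAt_movingBump (hν : ∀ x, 0 < ν x) (hN : ∀ x, HasDerivAt N (ν x) x) :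
    HasEllipticOpAt ν⁻¹ 0 (fun x => movingBump N c₁ c₂ g r κ θ s x y)
      (ν x * (θ * Real.exp (-(κ * s)) * ((2 * g - 4 * g ^ 2 * (N x - c₁ s) ^ 2) *
        Real.exp (g * (2 * r ^ 2 - (N x - c₁ s) ^ 2 - (N y - c₂ s) ^ 2))))) x := by
  have hp := (((hN x).sub_const (c₁ s)).fun_pow 2).const_sub (2 * r ^ 2)
  have hexp := ((hp.sub_const ((N y - c₂ s) ^ 2)).const_mul g).exp
  have hflux := (((((hN x).sub_const (c₁ s)).const_mul (2 * g)).fun_neg).fun_mul hexp).const_mul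
    (θ * Real.exp (-(κ * s)))
  refine (HasEllipticOpAt.of_hasDerivAt (.of_forall fun ξ => hasDerivAt_movingBump (hN ξ))
    (hflux.congr_of_eventuallyEq (.of_forall fun ξ =>
      inv_mul_cancel_left₀ (hν ξ).ne' _))).congr_op ?_
  push_cast
  ring

theorem two_mul_sq_le_exp_mul_add_sq {ρ : ℝ} (hg : 1 ≤ g * r ^ 2) (hρ₀ : 0 ≤ ρ)
    (hρ : ρ ≤ 2 * r ^ 2) : 2 * r ^ 2 ≤ Real.exp (g * (2 * r ^ 2 - ρ)) * (ρ + r ^ 2) := by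
  have hr : 0 < r ^ 2 := (sq_nonneg r).lt_of_ne fun h => by
    rw [← h, mul_zero] at hg; exact zero_lt_one.not_ge hg
  have hexp : 3 * r ^ 2 - ρ ≤ Real.exp (g * (2 * r ^ 2 - ρ)) * r ^ 2 := by
    have := mul_le_mul_of_nonneg_right (Real.add_one_le_exp (g * (2 * r ^ 2 - ρ))) hr.le
    have := mul_le_mul_of_nonneg_right hg (sub_nonneg.2 hρ)
    linarith
  refine le_of_mul_le_mul_right ?_ hr
  calc 2 * r ^ 2 * r ^ 2 ≤ (3 * r ^ 2 - ρ) * (ρ + r ^ 2) := by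
        nlinarith [mul_nonneg hρ₀ (sub_nonneg.2 hρ), mul_pos hr hr]
    _ ≤ Real.exp (g * (2 * r ^ 2 - ρ)) * r ^ 2 * (ρ + r ^ 2) := by gcongr
    _ = _ := by ring

theorem four_mul_sq_mul_le_bump_operator {p q A₁ A₂ : ℝ} (hg : 0 ≤ g) (hr : 0 ≤ r)
    (hA₁ : A₁ ∈ Icc lam Lam) (hA₂ : A₂ ∈ Icc lam Lam)
    (hV : Lam + r * (|V₁| + |V₂|) ≤ g * lam * r ^ 2) (hpq : p ^ 2 + q ^ 2 < 2 * r ^ 2) :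
    4 * g ^ 2 * lam * (p ^ 2 + q ^ 2 - r ^ 2) ≤
      A₁ * (4 * g ^ 2 * p ^ 2 - 2 * g) + A₂ * (4 * g ^ 2 * q ^ 2 - 2 * g) -
        2 * g * (p * V₁ + q * V₂) := by
  have hdrift : ∀ {p V : ℝ}, p ^ 2 ≤ 2 * r ^ 2 → p * V ≤ 2 * r * |V| := fun {p V} hp =>
    (le_abs_self _).trans ((abs_mul p V).trans_le (by
      gcongr
      exact abs_le_of_sq_le_sq (by nlinarith) (by positivity)))
  have hp := hdrift (V := V₁) (by nlinarith : p ^ 2 ≤ 2 * r ^ 2)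
  have hq := hdrift (V := V₂) (by nlinarith : q ^ 2 ≤ 2 * r ^ 2)
  have hfirst : A₁ + A₂ + (p * V₁ + q * V₂) ≤ 2 * (g * lam * r ^ 2) := by
    linarith [hA₁.2, hA₂.2]
  have hsecond : lam * p ^ 2 + lam * q ^ 2 ≤ A₁ * p ^ 2 + A₂ * q ^ 2 := by
    gcongr
    exacts [hA₁.1, hA₂.1]
  have := mul_le_mul_of_nonneg_left hfirst hg
  have := mul_le_mul_of_nonneg_left hsecond (sq_nonneg g)
  linarith

theorem isDoubledSubsolAt_movingBump (hν : ∀ x, 0 < ν x) (hN : ∀ x, HasDerivAt N (ν x) x)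
    (hlam : 0 < lam) (hA : ∀ x, ν x * k x ∈ Icc lam Lam) (hr : 0 ≤ r) (hθ : 0 ≤ θ)
    (hc₁ : HasDerivAt c₁ (W + V₁) s) (hc₂ : HasDerivAt c₂ (W + V₂) s)
    (hV : Lam + r * (|V₁| + |V₂|) ≤ g * lam * r ^ 2)
    (hpos : (N x - c₁ s) ^ 2 + (N y - c₂ s) ^ 2 < 2 * r ^ 2) :
    IsDoubledSubsolAt ν k W (movingBump N c₁ c₂ g r (8 * g ^ 2 * lam * r ^ 2) θ) s x y := by
  have hgr : 1 ≤ g * r ^ 2 := le_of_mul_le_mul_left (by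
    linarith [(hA x).1.trans (hA x).2, mul_nonneg hr (add_nonneg (abs_nonneg V₁) (abs_nonneg V₂))])
    hlam
  have hg : 0 ≤ g := (pos_of_mul_pos_left (zero_lt_one.trans_le hgr) (sq_nonneg r)).le
  have hswap : movingBump N c₁ c₂ g r (8 * g ^ 2 * lam * r ^ 2) θ s x =
      fun ξ => movingBump N c₂ c₁ g r (8 * g ^ 2 * lam * r ^ 2) θ s ξ x :=
    funext fun ξ => movingBump_swap ..
  refine ⟨_, _, _, hasDerivAt_movingBump_time hc₁ hc₂ x y, hasEllipticOpAt_movingBump hν hN,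
    hswap ▸ hasEllipticOpAt_movingBump hν hN, ?_⟩
  rw [(hasDerivAt_movingBump (hN x)).deriv, hswap, (hasDerivAt_movingBump (hN y)).deriv,
    mul_div_cancel_left₀ _ (hν x).ne', mul_div_cancel_left₀ _ (hν y).ne']
  have hoperator := four_mul_sq_mul_le_bump_operator hg hr (hA x) (hA y) hV hpos
  have hdecay := two_mul_sq_le_exp_mul_add_sq hgr (add_nonneg (sq_nonneg (N x - c₁ s))
    (sq_nonneg (N y - c₂ s))) hpos.le
  rw [← sub_sub] at hdecay
  simp only [movingBump, sub_right_comm _ ((N y - c₂ s) ^ 2)]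
  set p := N x - c₁ s
  set q := N y - c₂ s
  set E := Real.exp (g * (2 * r ^ 2 - p ^ 2 - q ^ 2))
  have hE : 0 ≤ E := Real.exp_nonneg _
  have h := add_le_add (mul_le_mul_of_nonneg_left hoperator hE)
    (mul_le_mul_of_nonneg_left hdecay (by positivity : 0 ≤ 4 * g ^ 2 * lam))
  have := mul_le_mul_of_nonneg_left h
    (by positivity : 0 ≤ θ * Real.exp (-(8 * g ^ 2 * lam * r ^ 2 * s)))
  linarith

theorem continuous_movingBump (hN : Continuous N) (hc₁ : Continuous c₁) (hc₂ : Continuous c₂) :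
    Continuous fun p : ℝ × ℝ × ℝ => movingBump N c₁ c₂ g r κ θ p.1 p.2.1 p.2.2 := by
  unfold movingBump
  fun_prop

theorem movingBump_zero_le (hθ : 0 ≤ θ) (hg : 0 ≤ g) :
    movingBump N c₁ c₂ g r κ θ 0 x y ≤ θ * Real.exp (2 * g * r ^ 2) := by
  rw [movingBump, mul_zero, neg_zero, Real.exp_zero, mul_one]
  gcongr
  rw [sub_le_iff_le_add]
  refine (Real.exp_le_exp.2 ?_).trans (le_add_of_nonneg_right zero_le_one)
  nlinarith [mul_nonneg hg (sq_nonneg (N x - c₁ 0)), mul_nonneg hg (sq_nonneg (N y - c₂ 0))]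

end MovingBump

section PointwiseBound

variable {ν k N : ℝ → ℝ} {W lam Lam g r θ : ℝ} {u : ℝ → ℝ → ℝ}

theorem movingBump_le_integral_mul (hνc : Continuous ν) (hν : ∀ x, 0 < ν x) (hkc : Continuous k)
    (hk : ∀ x, 0 < k x) (hN : ∀ x, HasDerivAt N (ν x) x) (hNtop : Tendsto N atTop atTop)
    (hNbot : Tendsto N atBot atBot) (hlam : 0 < lam) (hA : ∀ x, ν x * k x ∈ Icc lam Lam)
    (hu : ∀ t > 0, ∀ x, 0 ≤ u t x) (hsol : ∀ t > 0, ∀ x, HasParabolicOpAt ν k W u 0 t x)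
    {s τ : ℝ} (hs : 0 < s) (hτ : 0 < τ) (hr : 0 < r) {f : ℝ →ᵇ ℝ} (hf₀ : ∀ x, 0 ≤ f x)
    (hfu : ∀ x, f x ≤ u s x) (hfN : ∀ x, r ≤ |N x| → f x = 0) (hg : 0 ≤ g) (hθ : 0 ≤ θ)
    (hmass : ∀ x y, r ≤ N x → N y ≤ -r →
      θ * Real.exp (2 * g * r ^ 2) ≤ ∫ ξ in y..x, ν ξ * f ξ)
    {c₁ c₂ : ℝ → ℝ} {V₁ V₂ : ℝ} (hc₁ : ∀ t, HasDerivAt c₁ (W + V₁) t)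
    (hc₂ : ∀ t, HasDerivAt c₂ (W + V₂) t) (hc₁0 : 3 * r ≤ c₁ 0) (hc₂0 : c₂ 0 ≤ -(3 * r))
    (hsep : ∀ t ∈ Icc 0 τ, 2 * r ≤ c₁ t - c₂ t)
    (hV : Lam + r * (|V₁| + |V₂|) ≤ g * lam * r ^ 2) {x y : ℝ} (hyx : y ≤ x) :
    movingBump N c₁ c₂ g r (8 * g ^ 2 * lam * r ^ 2) θ τ x y ≤
      ∫ ξ in y..x, ν ξ * u (s + τ) ξ := by
  have hNmono : StrictMono N := strictMono_of_hasDerivAt_pos hN hν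
  have hNc : Continuous N := continuous_iff_continuousAt.2 fun x => (hN x).continuousAt
  have hc₁c : Continuous c₁ := continuous_iff_continuousAt.2 fun t => (hc₁ t).continuousAt
  have hc₂c : Continuous c₂ := continuous_iff_continuousAt.2 fun t => (hc₂ t).continuousAt
  obtain ⟨B₁, hB₁⟩ := isCompact_Icc.exists_bound_of_continuousOn (s := Icc 0 τ) hc₁c.continuousOn
  obtain ⟨B₂, hB₂⟩ := isCompact_Icc.exists_bound_of_continuousOn (s := Icc 0 τ) hc₂c.continuousOn
  obtain ⟨α, ⟨hαr, hαB⟩, hαy⟩ := (((hNbot.eventually_le_atBot (-r)).and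
    (hNbot.eventually_le_atBot (-B₂ - 2 * r))).and (eventually_lt_atBot y)).exists
  obtain ⟨β, ⟨hβr, hβB⟩, hxβ⟩ := (((hNtop.eventually_ge_atTop r).and
    (hNtop.eventually_ge_atTop (B₁ + 2 * r))).and (eventually_gt_atTop x)).exists
  refine le_integral_mul_of_isDoubledSubsolAt hνc hν hkc hk (α := α) (β := β) hτ
    (fun t ht => hu t (hs.trans ht)) (fun t ht => hsol t (hs.trans ht))
    (fun t ht => futureLSCAt_of_nonneg hνc hν hkc hk hu hsol t (hs.trans_le ht))
    (fun ξ hξ => hfN ξ (not_lt.1 fun h => hξ ?_)) hf₀ hfu (continuous_movingBump hNc hc₁c hc₂c)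
    (fun t ht x y hpos => ?_) (fun x _ y _ _ hpos => ?_) hαy hyx hxβ
  · rw [abs_lt] at h
    exact ⟨hNmono.lt_iff_lt.1 (hαr.trans_lt h.1), hNmono.lt_iff_lt.1 (h.2.trans_le hβr)⟩
  · have hlt := sq_add_sq_lt_of_movingBump_pos hg hθ hpos
    have ht' : t ∈ Icc 0 τ := ⟨ht.1.le, ht.2⟩
    obtain ⟨hp, hq, hpq⟩ := abs_lt_of_movingBump_pos hg hr hθ hpos
    rw [abs_lt] at hp hq hpq
    refine ⟨hNmono.lt_iff_lt.1 ?_, hNmono.lt_iff_lt.1 ?_, hNmono.lt_iff_lt.1 ?_,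
      isDoubledSubsolAt_movingBump hν hN hlam hA hr.le hθ (hc₁ t) (hc₂ t) hV hlt⟩
    · linarith [neg_le_of_abs_le (hB₂ t ht')]
    · linarith [hsep t ht']
    · linarith [le_of_abs_le (hB₁ t ht')]
  · obtain ⟨hp, hq, -⟩ := abs_lt_of_movingBump_pos hg hr hθ hpos
    rw [abs_lt] at hp hq
    exact (movingBump_zero_le hθ hg).trans (hmass x y (by linarith) (by linarith))

theorem le_of_hasDerivAt_of_eventually_le {f h : ℝ → ℝ} {f' h' x : ℝ} (hf : HasDerivAt f f' x)
    (hh : HasDerivAt h h' x) (heq : f x = h x) (hle : ∀ᶠ ξ in 𝓝[>] x, f ξ ≤ h ξ) : f' ≤ h' := by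
  refine le_of_tendsto_of_tendsto
    ((hasDerivWithinAt_iff_tendsto_slope' self_notMem_Ioi).1 hf.hasDerivWithinAt)
    ((hasDerivWithinAt_iff_tendsto_slope' self_notMem_Ioi).1 hh.hasDerivWithinAt) ?_
  filter_upwards [hle, self_mem_nhdsWithin] with ξ hξ hxξ
  have := sub_pos.2 (mem_Ioi.1 hxξ)
  rw [slope_def_field, slope_def_field, heq]
  gcongr

theorem mul_exp_neg_le_of_mass_le (hνc : Continuous ν) (hν : ∀ x, 0 < ν x) (hkc : Continuous k)
    (hk : ∀ x, 0 < k x) (hN : ∀ x, HasDerivAt N (ν x) x) (hNtop : Tendsto N atTop atTop)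
    (hNbot : Tendsto N atBot atBot) (hlam : 0 < lam) (hA : ∀ x, ν x * k x ∈ Icc lam Lam)
    (hu : ∀ t > 0, ∀ x, 0 ≤ u t x) (hsol : ∀ t > 0, ∀ x, HasParabolicOpAt ν k W u 0 t x)
    {s τ : ℝ} (hs : 0 < s) (hτ : 0 < τ) (hr : 0 < r) {f : ℝ →ᵇ ℝ} (hf₀ : ∀ x, 0 ≤ f x)
    (hfu : ∀ x, f x ≤ u s x) (hfN : ∀ x, r ≤ |N x| → f x = 0) (hg : 0 ≤ g) (hθ : 0 ≤ θ)
    (hmass : ∀ x y, r ≤ N x → N y ≤ -r →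
      θ * Real.exp (2 * g * r ^ 2) ≤ ∫ ξ in y..x, ν ξ * f ξ)
    {x : ℝ} (hx : Lam + r * ((2 * |N x - W * τ| + 4 * r) / τ) ≤ g * lam * r ^ 2) :
    θ * Real.exp (-(8 * g ^ 2 * lam * r ^ 2 * τ)) * (2 * g * r) ≤ u (s + τ) x := by
  set Z := N x - W * τ with hZ
  have hc : ∀ c V t : ℝ, HasDerivAt (fun t => c + (W + V) * t) (W + V) t := fun c V t => by
    simpa using ((hasDerivAt_id t).const_mul (W + V)).const_add c
  have hV : |(Z - 2 * r) / τ| + |(Z + 2 * r) / τ| ≤ (2 * |Z| + 4 * r) / τ := by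
    rw [abs_div, abs_div, abs_of_pos hτ, ← add_div]
    refine div_le_div_of_nonneg_right ?_ hτ.le
    have h₁ := abs_sub Z (2 * r)
    have h₂ := abs_add_le Z (2 * r)
    rw [abs_of_pos (by positivity : 0 < 2 * r)] at h₁ h₂
    linarith
  have hle := fun ξ (hξ : x ≤ ξ) => movingBump_le_integral_mul hνc hν hkc hk hN hNtop hNbot hlam hA
    hu hsol hs hτ hr hf₀ hfu hfN hg hθ hmass (hc (3 * r) ((Z - 2 * r) / τ))
    (hc (-(3 * r)) ((Z + 2 * r) / τ)) (by simp) (by simp) (fun t ht => ?_)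
    (hx.trans' (by gcongr)) hξ
  · have huc : Continuous (u (s + τ)) := continuous_iff_continuousAt.2 fun ξ =>
      (hsol (s + τ) (by positivity) ξ).continuousAt
    have hp : N x - (3 * r + (W + (Z - 2 * r) / τ) * τ) = -r := by rw [hZ]; field_simp; ring
    have hq : N x - (-(3 * r) + (W + (Z + 2 * r) / τ) * τ) = r := by rw [hZ]; field_simp; ring
    have hzero : g * (2 * r ^ 2 - (-r) ^ 2 - r ^ 2) = 0 := by ring
    have hderiv := le_of_hasDerivAt_of_eventually_le (hasDerivAt_movingBump (hN x))
      (hasDerivAt_integral_of_continuous (hνc.mul huc) x x) (by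
        simp only [movingBump, hp, hq, hzero, intervalIntegral.integral_same, Real.exp_zero,
          sub_self, mul_zero])
      (eventually_mem_nhdsWithin.mono fun ξ hξ => hle ξ (mem_Ioi.1 hξ).le)
    rw [hp, hq, hzero, Real.exp_zero] at hderiv
    refine (le_of_mul_le_mul_left hderiv (hν x)).trans_eq' ?_
    ring
  · have : (Z + 2 * r) / τ * t - (Z - 2 * r) / τ * t = 4 * r * (t / τ) := by ring
    have := mul_le_mul_of_nonneg_left ((div_le_one hτ).2 ht.2) (by positivity : 0 ≤ 4 * r)
    linarith

end PointwiseBound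

/-! ### The lower bound -/

section Ellipticity

variable {μ m : ℝ} {f g : ℝ → ℝ}

theorem Elliptic.pos (hμ : 0 < μ) (hf : Elliptic μ f) (x : ℝ) : 0 < f x :=
  (one_div_pos.2 hμ).trans_le (hf x).1

theorem Elliptic.mul (hμ : 0 < μ) (hm : 0 < m) (hf : Elliptic μ f) (hg : Elliptic m g) :
    Elliptic (μ * m) fun x => f x * g x := fun x =>
  ⟨by
    rw [← one_div_mul_one_div]
    exact mul_le_mul (hf x).1 (hg x).1 (one_div_pos.2 hm).le (hf.pos hμ x).le,
  mul_le_mul (hf x).2 (hg x).2 (hg.pos hm x).le hμ.le⟩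

theorem mul_sub_le_sub_of_le_hasDerivAt (hf : ∀ x, HasDerivAt f (g x) x) (hm : ∀ x, m ≤ g x)
    {x y : ℝ} (hxy : x ≤ y) : m * (y - x) ≤ f y - f x :=
  mul_sub_le_image_sub_of_le_deriv (fun x => (hf x).differentiableAt)
    (fun x => (hf x).deriv ▸ hm x) hxy

theorem mul_abs_sub_le_of_le_hasDerivAt (hf : ∀ x, HasDerivAt f (g x) x) (hm : ∀ x, m ≤ g x)
    (x y : ℝ) : m * |x - y| ≤ |f x - f y| := by
  wlog h : y ≤ x generalizing x y
  · rw [abs_sub_comm x, abs_sub_comm (f x)]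
    exact this y x (le_of_not_ge h)
  rw [abs_of_nonneg (sub_nonneg.2 h)]
  exact (mul_sub_le_sub_of_le_hasDerivAt hf hm h).trans (le_abs_self _)

theorem tendsto_atTop_of_le_hasDerivAt (hf : ∀ x, HasDerivAt f (g x) x) (hm₀ : 0 < m)
    (hm : ∀ x, m ≤ g x) : Tendsto f atTop atTop := by
  refine tendsto_atTop_mono' atTop ?_
    (tendsto_atTop_add_const_right atTop (f 0) (tendsto_id.const_mul_atTop hm₀))
  filter_upwards [eventually_ge_atTop 0] with x hx
  simpa [le_sub_iff_add_le] using mul_sub_le_sub_of_le_hasDerivAt hf hm hx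

theorem tendsto_atBot_of_le_hasDerivAt (hf : ∀ x, HasDerivAt f (g x) x) (hm₀ : 0 < m)
    (hm : ∀ x, m ≤ g x) : Tendsto f atBot atBot := by
  refine tendsto_atBot_mono' atBot ?_
    (tendsto_atBot_add_const_right atBot (f 0) (tendsto_id.const_mul_atBot hm₀))
  filter_upwards [eventually_le_atBot 0] with x hx
  have := mul_sub_le_sub_of_le_hasDerivAt hf hm hx
  simp only [id]
  linarith

end Ellipticity

section FundamentalBound

/-- The tent of height `1` and half-width `r` in the coordinate `N`: the cutoff that localizes an
initial point mass at the zero of `N`. -/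
noncomputable def tentCutoff (N : ℝ → ℝ) (r ξ : ℝ) : ℝ := max 0 (1 - |N ξ| / r)

variable {ν k N : ℝ → ℝ} {W M r t y : ℝ} {u : ℝ → ℝ → ℝ}

theorem tentCutoff_nonneg (ξ : ℝ) : 0 ≤ tentCutoff N r ξ := le_max_left _ _

theorem tentCutoff_le_one (hr : 0 ≤ r) (ξ : ℝ) : tentCutoff N r ξ ≤ 1 :=
  max_le zero_le_one (sub_le_self 1 (by positivity))

theorem tentCutoff_of_le_abs (hr : 0 < r) {ξ : ℝ} (h : r ≤ |N ξ|) : tentCutoff N r ξ = 0 :=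
  max_eq_left (sub_nonpos.2 ((one_le_div hr).2 h))

theorem tentCutoff_of_eq_zero (h : N y = 0) : tentCutoff N r y = 1 := by simp [tentCutoff, h]

theorem continuous_tentCutoff (hN : Continuous N) : Continuous (tentCutoff N r) := by
  unfold tentCutoff; fun_prop

theorem hasCompactSupport_tentCutoff (hr : 0 < r) (hNtop : Tendsto N atTop atTop)
    (hNbot : Tendsto N atBot atBot) : HasCompactSupport (tentCutoff N r) := by
  obtain ⟨β, hβ⟩ := (hNtop.eventually_ge_atTop r).exists_forall_of_atTop
  obtain ⟨α, hα⟩ := (hNbot.eventually_le_atBot (-r)).exists_forall_of_atBot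
  refine .intro (isCompact_Icc (a := α) (b := β)) fun ξ hξ => tentCutoff_of_le_abs hr ?_
  rcases le_total ξ α with h | h
  · exact le_abs.2 (.inr (le_neg_of_le_neg (hα ξ h)))
  · exact le_abs.2 (.inl (hβ ξ (le_of_not_ge fun h' => hξ ⟨h, h'⟩)))

theorem intervalIntegral_eq_integral_of_eq_zero (hN : Monotone N) {f : ℝ → ℝ}
    (hf : ∀ ξ, r ≤ |N ξ| → f ξ = 0) {x y : ℝ} (hx : r ≤ N x) (hy : N y ≤ -r) :
    ∫ ξ in y..x, f ξ = ∫ ξ, f ξ := by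
  refine intervalIntegral.integral_eq_integral_of_support_subset fun ξ hξ => ?_
  by_contra hmem
  refine hξ (hf ξ (le_abs.2 ?_))
  rcases le_or_gt ξ y with h | h
  · exact .inr (le_neg_of_le_neg ((hN h).trans hy))
  · exact .inl (hx.trans (hN (le_of_not_ge fun h' => hmem ⟨h, h'⟩)))

/-- The logarithmic height `2 g r²` of a moving bump whose centres travel, within the given time,
from the source to a point `ζ` diffusive lengths away from the transported source. -/
def bumpHeight (M ζ : ℝ) : ℝ := M * (2 * M + 24 + 8 * ζ)

theorem le_bumpHeight (hM : 1 ≤ M) {ζ : ℝ} (hζ : 0 ≤ ζ) : 2 ≤ bumpHeight M ζ := by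
  unfold bumpHeight; nlinarith

theorem add_drift_cost_le_bumpHeight (hM : 0 < M) (hr : 0 < r) {τ Z Z' : ℝ} (hτ : r ^ 2 / 2 ≤ τ)
    (hZ : |Z'| ≤ |Z| + r) :
    M + r * ((2 * |Z'| + 4 * r) / τ) ≤
      bumpHeight M (|Z| / r) / (2 * r ^ 2) * (1 / M) * r ^ 2 := by
  calc M + r * ((2 * |Z'| + 4 * r) / τ)
      ≤ M + r * ((2 * (|Z| + r) + 4 * r) / (r ^ 2 / 2)) := by gcongr
    _ = bumpHeight M (|Z| / r) / (2 * r ^ 2) * (1 / M) * r ^ 2 := by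
        unfold bumpHeight; field_simp; ring

theorem bump_value_ge (hM : 1 ≤ M) (hr : 0 < r) {τ γ : ℝ}
    (hτ₀ : 0 ≤ τ) (hτ : τ ≤ r ^ 2) (hγ : 2 ≤ γ) :
    Real.exp (-(γ + 2 * γ ^ 2)) / (2 * r) ≤
      Real.exp (-γ) / 4 * Real.exp (-(8 * (γ / (2 * r ^ 2)) ^ 2 * (1 / M) * r ^ 2 * τ)) *
        (2 * (γ / (2 * r ^ 2)) * r) := by
  have hdecay : 8 * (γ / (2 * r ^ 2)) ^ 2 * (1 / M) * r ^ 2 * τ ≤ 2 * γ ^ 2 :=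
    calc 8 * (γ / (2 * r ^ 2)) ^ 2 * (1 / M) * r ^ 2 * τ
        ≤ 8 * (γ / (2 * r ^ 2)) ^ 2 * 1 * r ^ 2 * r ^ 2 := by
          have := div_le_one_of_le₀ hM (zero_le_one.trans hM)
          gcongr
      _ = 2 * γ ^ 2 := by field_simp; ring
  calc Real.exp (-(γ + 2 * γ ^ 2)) / (2 * r)
      = Real.exp (-γ) / 4 * Real.exp (-(2 * γ ^ 2)) * (2 * (2 / (2 * r ^ 2)) * r) := by
        rw [neg_add, Real.exp_add]; field_simp; ring
    _ ≤ _ := by gcongr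

theorem exists_small_time_one_half_lt {F : ℝ → ℝ} (hF : Tendsto F (𝓝[>] 0) (𝓝 1)) (ht : 0 < t)
    (hr : 0 < r) : ∃ s, 0 < s ∧ s < t ∧ |W * s| ≤ r ∧ 1 / 2 < F s := by
  have hpos : 0 < min t (r / (|W| + 1)) := by positivity
  obtain ⟨s, hFs, hs₀, hs⟩ := ((hF.eventually_const_lt (by norm_num : (1 / 2 : ℝ) < 1)).and
    (Ioo_mem_nhdsGT hpos)).exists
  obtain ⟨hst, hsr⟩ := lt_min_iff.1 hs
  rw [lt_div_iff₀ (by positivity)] at hsr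
  refine ⟨s, hs₀, hst, ?_, hFs⟩
  rw [abs_mul, abs_of_pos hs₀]
  linarith

theorem exists_cutoff_datum (hν : ∀ x, 0 < ν x)
    (hN : ∀ x, HasDerivAt N (ν x) x) (hNtop : Tendsto N atTop atTop)
    (hNbot : Tendsto N atBot atBot) (hr : 0 < r) {v : ℝ → ℝ} (hvc : Continuous v)
    (hv : ∀ x, 0 ≤ v x) :
    ∃ f : ℝ →ᵇ ℝ, (∀ x, 0 ≤ f x) ∧ (∀ x, f x ≤ v x) ∧ (∀ x, r ≤ |N x| → f x = 0) ∧
      ∀ x y, r ≤ N x → N y ≤ -r →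
        ∫ ξ in y..x, ν ξ * f ξ = ∫ ξ, ν ξ * v ξ * tentCutoff N r ξ := by
  have hNc : Continuous N := continuous_iff_continuousAt.2 fun x => (hN x).continuousAt
  have hfc : Continuous fun ξ => v ξ * tentCutoff N r ξ := hvc.mul (continuous_tentCutoff hNc)
  obtain ⟨B, hB⟩ := ((hasCompactSupport_tentCutoff hr hNtop hNbot).mul_left
    (f := v)).exists_bound_of_continuous hfc
  have hfN : ∀ x, r ≤ |N x| → v x * tentCutoff N r x = 0 := fun x hx => by
    rw [tentCutoff_of_le_abs hr hx, mul_zero]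
  refine ⟨.ofNormedAddCommGroup _ hfc B hB, fun x => mul_nonneg (hv x) (tentCutoff_nonneg x),
    fun x => mul_le_of_le_one_right (hv x) (tentCutoff_le_one hr.le x), hfN, fun x y hx hy => ?_⟩
  simp only [mul_assoc]
  exact intervalIntegral_eq_integral_of_eq_zero (strictMono_of_hasDerivAt_pos hN hν).monotone
    (fun ξ hξ => mul_eq_zero_of_right _ (hfN ξ hξ)) hx hy

theorem exp_neg_bumpHeight_div_le (hνc : Continuous ν) (hν : ∀ x, 0 < ν x) (hkc : Continuous k)
    (hk : ∀ x, 0 < k x) (hN : ∀ x, HasDerivAt N (ν x) x) (hNtop : Tendsto N atTop atTop)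
    (hNbot : Tendsto N atBot atBot) (hM : 1 ≤ M) (hA : Elliptic M fun x => ν x * k x)
    (hu : ∀ t > 0, ∀ x, 0 ≤ u t x) (hsol : ∀ t > 0, ∀ x, HasParabolicOpAt ν k W u 0 t x)
    (hr : 0 < r)
    (hmass : Tendsto (fun t => ∫ x, ν x * u t x * tentCutoff N r x) (𝓝[>] 0) (𝓝 1)) (x : ℝ) :
    Real.exp (-(bumpHeight M (|N x - W * r ^ 2| / r) +
      2 * bumpHeight M (|N x - W * r ^ 2| / r) ^ 2)) / (2 * r) ≤ u (r ^ 2) x := by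
  obtain ⟨s, hs, hsr, hWs, hms⟩ := exists_small_time_one_half_lt hmass
    (by positivity : 0 < r ^ 2 / 2) hr (W := W)
  obtain ⟨f, hf₀, hfu, hfN, hfm⟩ := exists_cutoff_datum hν hN hNtop hNbot hr
    (continuous_iff_continuousAt.2 fun x => (hsol s hs x).continuousAt) (hu s hs)
  set γ := bumpHeight M (|N x - W * r ^ 2| / r)
  have hγ : 2 ≤ γ := le_bumpHeight hM (by positivity)
  have hdist : |N x - W * (r ^ 2 - s)| ≤ |N x - W * r ^ 2| + r := by
    rw [mul_sub, ← sub_add]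
    exact (abs_add_le _ _).trans (by gcongr)
  have hheight : Real.exp (-γ) / 4 * Real.exp (2 * (γ / (2 * r ^ 2)) * r ^ 2) = 1 / 4 := by
    rw [show 2 * (γ / (2 * r ^ 2)) * r ^ 2 = γ by field_simp, div_mul_eq_mul_div, ← Real.exp_add,
      neg_add_cancel, Real.exp_zero]
  have hlower := mul_exp_neg_le_of_mass_le (g := γ / (2 * r ^ 2)) (θ := Real.exp (-γ) / 4)
    (τ := r ^ 2 - s) hνc hν hkc hk hN hNtop hNbot (by positivity : 0 < 1 / M) hA hu hsol hs
    (by linarith) hr hf₀ hfu hfN (by positivity) (by positivity)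
    (fun x₁ x₂ h₁ h₂ => by rw [hfm x₁ x₂ h₁ h₂, hheight]; linarith)
    (add_drift_cost_le_bumpHeight (by positivity) hr (by linarith) hdist)
  rw [add_sub_cancel] at hlower
  exact (bump_value_ge hM hr (by linarith) (by linarith) hγ).trans hlower

theorem IsCanonicalSolOn.exp_neg_bumpHeight_div_le {μ : ℝ} {a : ℝ → ℝ} (hμ : 1 ≤ μ)
    (hνc : Continuous ν) (hac : Continuous a) (hν : Elliptic μ ν) (ha : Elliptic μ a)
    (hsol : IsCanonicalSolOn ν a W u (Ioi 0)) (hu : ∀ t > 0, ∀ x, 0 ≤ u t x)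
    (hinit : ∀ φ : ℝ → ℝ, Continuous φ → HasCompactSupport φ →
      Tendsto (fun t => ∫ x, ν x * u t x * φ x) (𝓝[>] 0) (𝓝 (φ y))) (hr : 0 < r) (x : ℝ) :
    let γ := bumpHeight (μ ^ 3) (|(∫ ξ in y..x, ν ξ) - W * r ^ 2| / r)
    Real.exp (-(γ + 2 * γ ^ 2)) / (2 * r) ≤ u (r ^ 2) x := by
  have hμ₀ : 0 < μ := by linarith
  have hk := hν.mul hμ₀ hμ₀ ha
  have hA := hν.mul hμ₀ (by positivity) hk
  rw [← pow_three] at hA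
  have hN := hasDerivAt_integral_of_continuous hνc y
  have hNc : Continuous fun ξ => ∫ z in y..ξ, ν z :=
    continuous_iff_continuousAt.2 fun ξ => (hN ξ).continuousAt
  have hNtop := tendsto_atTop_of_le_hasDerivAt hN (one_div_pos.2 hμ₀) fun ξ => (hν ξ).1
  have hNbot := tendsto_atBot_of_le_hasDerivAt hN (one_div_pos.2 hμ₀) fun ξ => (hν ξ).1
  have hmass := hinit _ (continuous_tentCutoff hNc) (hasCompactSupport_tentCutoff hr hNtop hNbot)
  rw [tentCutoff_of_eq_zero (by exact intervalIntegral.integral_same)] at hmass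
  exact _root_.exp_neg_bumpHeight_div_le hνc (hν.pos hμ₀) (hνc.mul hac) (hk.pos (by positivity)) hN
    hNtop hNbot (one_le_pow₀ hμ) hA hu (fun t ht x => hsol.hasParabolicOpAt ht x) hr hmass x

end FundamentalBound

section CorrectorComparison

variable {μ W : ℝ} {ν a T : ℝ → ℝ}

theorem IsCorrector.abs_mul_mass_sub_le (hμ : 0 < μ) (hνc : Continuous ν) (hν : Elliptic μ ν)
    (ha : Elliptic μ a) (hT : IsCorrector μ ν a W T) (x y : ℝ) :
    |W * ((∫ ξ in y..x, ν ξ) - (T x - T y))| ≤ μ ^ 7 := by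
  obtain ⟨-, T', hT', hflux, hbounds⟩ := hT
  have hconserved : ∀ ξ, HasDerivAt (fun ξ => a ξ * ν ξ * T' ξ - W * T ξ +
      W * ∫ z in y..ξ, ν z) 0 ξ := fun ξ =>
    (((hflux ξ).fun_sub ((hT' ξ).const_mul W)).fun_add
      ((hasDerivAt_integral_of_continuous hνc y ξ).const_mul W)).congr_deriv (by ring)
  have hconst := is_const_of_deriv_eq_zero (fun ξ => (hconserved ξ).differentiableAt)
    (fun ξ => (hconserved ξ).deriv) x y
  simp only [intervalIntegral.integral_same, mul_zero, add_zero] at hconst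
  have hell : Elliptic (μ * μ * μ ^ 5) fun ξ => a ξ * ν ξ * T' ξ :=
    (ha.mul hμ hμ hν).mul (by positivity) (by positivity) hbounds
  have hpos := hell.pos (by positivity)
  rw [show W * ((∫ ξ in y..x, ν ξ) - (T x - T y)) = a y * ν y * T' y - a x * ν x * T' x by
    linarith, show μ ^ 7 = μ * μ * μ ^ 5 by ring]
  exact abs_sub_le_of_nonneg_of_le (hpos y).le (hell y).2 (hpos x).le (hell x).2

theorem IsCorrector.abs_mass_le (hμ : 0 < μ) (hν : Elliptic μ ν) (hT : IsCorrector μ ν a W T)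
    (x y : ℝ) : |∫ ξ in y..x, ν ξ| ≤ μ ^ 6 * |T x - T y| := by
  obtain ⟨-, T', hT', -, hbounds⟩ := hT
  have hmass := intervalIntegral.norm_integral_le_of_norm_le_const (a := y) (b := x) (C := μ)
    (f := ν) fun z _ => by rw [Real.norm_of_nonneg (hν.pos hμ z).le]; exact (hν z).2
  have hexpand := mul_abs_sub_le_of_le_hasDerivAt hT' (fun ξ => (hbounds ξ).1) x y
  rw [one_div_mul_eq_div, div_le_iff₀ (by positivity)] at hexpand
  calc |∫ ξ in y..x, ν ξ| ≤ μ * |x - y| := hmass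
    _ ≤ μ * (|T x - T y| * μ ^ 5) := by gcongr
    _ = μ ^ 6 * |T x - T y| := by ring

theorem IsCorrector.abs_mass_sub_le (hμ : 1 ≤ μ) (hνc : Continuous ν) (hν : Elliptic μ ν)
    (ha : Elliptic μ a) (hT : IsCorrector μ ν a W T) {r : ℝ} (hr : 0 < r) (x y : ℝ) :
    |(∫ ξ in y..x, ν ξ) - W * r ^ 2| ≤ (μ ^ 7 + 1) * (|T x - T y - W * r ^ 2| + r) := by
  have hμ₀ : 0 < μ := by linarith
  set Y := T x - T y - W * r ^ 2 with hY
  rcases le_total 1 (|W| * r) with hWr | hWr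
  · have hflux := hT.abs_mul_mass_sub_le hμ₀ hνc hν ha x y
    rw [abs_mul] at hflux
    have hclose : |(∫ ξ in y..x, ν ξ) - (T x - T y)| ≤ μ ^ 7 * r :=
      calc _ ≤ |W| * r * |(∫ ξ in y..x, ν ξ) - (T x - T y)| :=
            le_mul_of_one_le_left (abs_nonneg _) hWr
        _ = |W| * |(∫ ξ in y..x, ν ξ) - (T x - T y)| * r := by ring
        _ ≤ μ ^ 7 * r := by gcongr
    calc |(∫ ξ in y..x, ν ξ) - W * r ^ 2| = |(∫ ξ in y..x, ν ξ) - (T x - T y) + Y| := by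
          rw [hY, sub_add_sub_cancel]
      _ ≤ μ ^ 7 * r + |Y| := (abs_add_le _ _).trans (by gcongr)
      _ ≤ (μ ^ 7 + 1) * (|Y| + r) := by nlinarith [abs_nonneg Y, pow_pos hμ₀ 7]
  · have hWr' : |W * r ^ 2| ≤ r := by
      rw [abs_mul, abs_of_nonneg (sq_nonneg r), sq, ← mul_assoc]
      exact mul_le_of_le_one_left hr.le hWr
    have hTY : |T x - T y| ≤ |Y| + r :=
      calc |T x - T y| = |Y + W * r ^ 2| := by rw [hY, sub_add_cancel]
        _ ≤ |Y| + r := (abs_add_le _ _).trans (by gcongr)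
    calc |(∫ ξ in y..x, ν ξ) - W * r ^ 2| ≤ μ ^ 6 * |T x - T y| + |W * r ^ 2| :=
          (abs_sub _ _).trans (by gcongr; exact hT.abs_mass_le hμ₀ hν x y)
      _ ≤ μ ^ 7 * (|Y| + r) + r := by
          gcongr
          norm_num
      _ ≤ (μ ^ 7 + 1) * (|Y| + r) := by nlinarith [abs_nonneg Y]

end CorrectorComparison

section Constants

theorem bumpHeight_add_two_mul_sq_le {M c ζ η : ℝ} (hM : 1 ≤ M) (hc : 0 ≤ c) (hη : 0 ≤ η)
    (hζ : 0 ≤ ζ) (hζη : ζ ≤ c * (η + 1)) :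
    bumpHeight M ζ + 2 * bumpHeight M ζ ^ 2 ≤ 6 * (26 * M ^ 2 * (1 + c)) ^ 2 * (1 + η ^ 2) := by
  have hle : bumpHeight M ζ ≤ 26 * M ^ 2 * (1 + c) * (1 + η) :=
    calc bumpHeight M ζ ≤ M * (26 * M * (1 + ζ)) := by
          unfold bumpHeight
          gcongr
          nlinarith
      _ ≤ M * (26 * M * ((1 + c) * (1 + η))) := by
          gcongr
          nlinarith
      _ = 26 * M ^ 2 * (1 + c) * (1 + η) := by ring
  have hone := le_bumpHeight hM hζ
  calc bumpHeight M ζ + 2 * bumpHeight M ζ ^ 2 ≤ 3 * bumpHeight M ζ ^ 2 := by nlinarith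
    _ ≤ 3 * (26 * M ^ 2 * (1 + c) * (1 + η)) ^ 2 := by gcongr
    _ = 3 * (26 * M ^ 2 * (1 + c)) ^ 2 * (1 + η) ^ 2 := by ring
    _ ≤ 3 * (26 * M ^ 2 * (1 + c)) ^ 2 * (2 * (1 + η ^ 2)) := by
        gcongr
        nlinarith [sq_nonneg (1 - η)]
    _ = 6 * (26 * M ^ 2 * (1 + c)) ^ 2 * (1 + η ^ 2) := by ring

theorem one_div_mul_exp_neg_le {C₁ C E q r : ℝ} (hC₁ : C₁ ≤ C) (hC : 2 * Real.exp C₁ ≤ C)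
    (hq : 0 ≤ q) (hE : E ≤ C₁ * (1 + q)) (hr : 0 < r) :
    1 / (C * r) * Real.exp (-(C * q)) ≤ Real.exp (-E) / (2 * r) := by
  calc 1 / (C * r) * Real.exp (-(C * q))
      ≤ 1 / (2 * Real.exp C₁ * r) * Real.exp (-(C₁ * q)) := by gcongr
    _ = Real.exp (-(C₁ * (1 + q))) / (2 * r) := by
        rw [mul_add, mul_one, neg_add, Real.exp_add, Real.exp_neg C₁]; field_simp
    _ ≤ Real.exp (-E) / (2 * r) := by gcongr

end Constants

theorem lower_gaussian_bound_general (μ : ℝ) (hμ : 1 ≤ μ) :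
    ∃ C : ℝ, 0 < C ∧ ∀ ν a : ℝ → ℝ, Continuous ν → Continuous a →
      Elliptic μ ν → Elliptic μ a →
      ∀ W : ℝ, ∀ T : ℝ → ℝ, IsCorrector μ ν a W T →
      ∀ u : ℝ → ℝ → ℝ, IsCanonicalSolOn ν a W u (Ioi 0) → (∀ t > 0, ∀ x, 0 ≤ u t x) →
      ∀ y : ℝ, (∀ φ : ℝ → ℝ, Continuous φ → HasCompactSupport φ →
        Tendsto (fun t => ∫ x, ν x * u t x * φ x) (𝓝[>] 0) (𝓝 (φ y))) →
      ∀ t : ℝ, 0 < t → ∀ x : ℝ,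
        1 / (C * √t) * Real.exp (-C * |T x - T y - W * t| ^ 2 / t) ≤ u t x := by
  set C₁ := 6 * (26 * (μ ^ 3) ^ 2 * (1 + (μ ^ 7 + 1))) ^ 2
  refine ⟨max C₁ (2 * Real.exp C₁), by positivity, fun ν a hνc hac hν ha W T hT u hsol hu y hinit
    t ht x => ?_⟩
  obtain ⟨r, hr, rfl⟩ : ∃ r > 0, r ^ 2 = t := ⟨√t, Real.sqrt_pos.2 ht, Real.sq_sqrt ht.le⟩
  have hcorrector : |(∫ ξ in y..x, ν ξ) - W * r ^ 2| / r ≤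
      (μ ^ 7 + 1) * (|T x - T y - W * r ^ 2| / r + 1) := by
    rw [div_add_one hr.ne', ← mul_div_assoc]
    gcongr
    exact hT.abs_mass_sub_le hμ hνc hν ha hr x y
  rw [Real.sqrt_sq hr.le, neg_mul, neg_div, mul_div_assoc, ← div_pow]
  exact (one_div_mul_exp_neg_le (le_max_left _ _) (le_max_right _ _) (by positivity)
    (bumpHeight_add_two_mul_sq_le (one_le_pow₀ hμ) (by positivity) (by positivity) (by positivity)
      hcorrector) hr).trans (hsol.exp_neg_bumpHeight_div_le hμ hνc hac hν ha hu hinit hr x)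

end LowerGaussianBound

/-- Theorem 1.1 (lower Gaussian bound): for every `μ ≥ 1` there is `C > 0` such that any
fundamental solution `P` of the canonical equation satisfies
`P(t,x,y) ≥ (1/(C√t))·exp(−C|T(x) − T(y) − Wt|²/t)` for all `t > 0`, `x, y ∈ ℝ`. -/
theorem lower_gaussian_bound (μ : ℝ) (hμ : 1 ≤ μ) :
    ∃ C : ℝ, 0 < C ∧ ∀ ν a : ℝ → ℝ, Continuous ν → Continuous a →
      Elliptic μ ν → Elliptic μ a →
      ∀ W : ℝ, 0 ≤ W →
      ∀ T : ℝ → ℝ, IsCorrector μ ν a W T →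
      ∀ P : ℝ → ℝ → ℝ → ℝ, IsFundSol ν a W P →
      ∀ t : ℝ, 0 < t → ∀ x y : ℝ,
        1 / (C * Real.sqrt t) *
          Real.exp (-C * |T x - T y - W * t| ^ 2 / t) ≤ P t x y := by
  obtain ⟨C, hC, hbound⟩ := lower_gaussian_bound_general μ hμ
  exact ⟨C, hC, fun ν a hνc hac hν ha W _ T hT P ⟨hsol, hP, _, hinit, _⟩ t ht x y =>
    hbound ν a hνc hac hν ha W T hT _ (hsol y) (hP y) y (fun φ hφc hφ =>
      hinit y φ hφc (hφ.exists_bound_of_continuous hφc)) t ht x⟩
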